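/- Let A be a dehyperplane arrangement in an n-simanifold T. For every flat X ∈ L_A, the number of chambers of the restriction A^X is given by #C_{A^X} = Σ_{Y ∈ L_A, Y ≥ X} (−1)^{dim Y − dim X} μ(X, Y), where μ is the Möbius function of L_A. -/

import Mathlib

open Set

noncomputable section

/-- The ambient Euclidean space `ℝ^N`. -/
abbrev Euc (N : ℕ) := EuclideanSpace ℝ (Fin N)

/-- An `i`-simanifold: a nonempty (open, i.e. boundaryless) contractible topological
`i`-manifold, realized as a subset of the ambient space. -/
def IsSimanifold {N : ℕ} (i : ℕ) (S : Set (Euc N)) : Prop :=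
  S.Nonempty ∧ ContractibleSpace S ∧ Nonempty (ChartedSpace (EuclideanSpace ℝ (Fin i)) S)

/-- A dehyperplane in an `n`-simanifold `T`: an `(n-1)`-simanifold `P ⊆ T` cutting `T`
into two `n`-simanifolds `plus` and `minus`, with `plus ⊔ P ⊔ minus = T` and
`closure plus ∩ closure minus = P`. -/
structure Dehyperplane (N n : ℕ) (T : Set (Euc N)) where
  P : Set (Euc N)
  plus : Set (Euc N)
  minus : Set (Euc N)
  simP : IsSimanifold (n - 1) P
  simPlus : IsSimanifold n plus
  simMinus : IsSimanifold n minus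
  union_eq : plus ∪ P ∪ minus = T
  disj_pP : Disjoint plus P
  disj_pm : Disjoint plus minus
  disj_Pm : Disjoint P minus
  closure_eq : closure plus ∩ closure minus = P

/-- `L_A`: the set of nonempty intersections of elements of `A` (empty intersection `T`),
the flats of `A`. (Ordered by reverse inclusion: `X ≤ Y ↔ Y ⊆ X`.) -/
def flats {N n : ℕ} {T : Set (Euc N)} (A : Set (Dehyperplane N n T)) : Set (Set (Euc N)) :=
  {X | X.Nonempty ∧ ∃ B ⊆ A, X = T ∩ ⋂ P ∈ B, P.P}

/-- A dehyperplane arrangement (DA) in the `n`-simanifold `T`. -/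
def IsDA {N : ℕ} (n : ℕ) (T : Set (Euc N)) (A : Set (Dehyperplane N n T)) : Prop :=
  A.Finite ∧ ∀ P ∈ A, ∀ X ∈ flats A, (P.P ∩ X).Nonempty →
    X ⊆ P.P ∨ ∃ i, 1 ≤ i ∧ i ≤ n ∧ IsSimanifold (i - 1) (P.P ∩ X) ∧
      IsSimanifold i (P.plus ∩ X) ∧ IsSimanifold i (P.minus ∩ X)

/-- `P^ε` for a sign `ε ∈ {+,0,-}`. -/
def Dehyperplane.part {N n : ℕ} {T : Set (Euc N)} (P : Dehyperplane N n T) :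
    SignType → Set (Euc N)
  | .pos => P.plus
  | .zero => P.P
  | .neg => P.minus

/-- A face of `A`: a nonempty set of the form `⋂_{P ∈ A} P^{ε_P}`. -/
def IsFace {N n : ℕ} {T : Set (Euc N)} (A : Set (Dehyperplane N n T))
    (F : Set (Euc N)) : Prop :=
  F.Nonempty ∧ ∃ ε : Dehyperplane N n T → SignType, F = T ∩ ⋂ P ∈ A, P.part (ε P)

/-- A chamber of `A`: a face with `ε_P ≠ 0` for all `P ∈ A`. -/
def IsChamber {N n : ℕ} {T : Set (Euc N)} (A : Set (Dehyperplane N n T))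
    (F : Set (Euc N)) : Prop :=
  F.Nonempty ∧ ∃ ε : Dehyperplane N n T → SignType,
    (∀ P ∈ A, ε P ≠ 0) ∧ F = T ∩ ⋂ P ∈ A, P.part (ε P)

/-- The restriction `A^X = {P ∩ X | P ∈ A, X ⊄ P, P ∩ X ≠ ∅}`, as dehyperplanes in `X`
(viewed as an `m`-simanifold), with halves `P^± ∩ X`. -/
def restrict {N n : ℕ} {T : Set (Euc N)} (A : Set (Dehyperplane N n T)) (m : ℕ)
    (X : Set (Euc N)) : Set (Dehyperplane N m X) :=
  {Q | ∃ P ∈ A, ¬ X ⊆ P.P ∧ (P.P ∩ X).Nonempty ∧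
    Q.P = P.P ∩ X ∧ Q.plus = P.plus ∩ X ∧ Q.minus = P.minus ∩ X}

/-- The dimension of a subset of `ℝ^N`: the largest `i` such that `S` contains an
`i`-simanifold. -/
def sdim {N : ℕ} (S : Set (Euc N)) : ℕ :=
  sSup {i | ∃ T : Set (Euc N), IsSimanifold i T ∧ T ⊆ S}

section Part1

namespace AS

/-- mod 2 cochains: functions on finite lists of points. -/
abbrev Co (M : Type*) := List M → ZMod 2

theorem z2 (a : ZMod 2) : a + a = 0 := CharTwo.add_self_eq_zero a

/-- coboundary -/
def del {M : Type*} : Co M → Co M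
  | _, [] => 0
  | Φ, x :: l => Φ l + del (fun l' => Φ (x :: l')) l

/-- pull back along a function -/
def pb {M M' : Type*} (r : M → M') (Φ : Co M') : Co M := fun l => Φ (l.map r)

/-- prism operator -/
def pr {M M' : Type*} (r s : M → M') : Co M' → Co M
  | _, [] => 0
  | Φ, x :: l => Φ (r x :: s x :: l.map s) + pr r s (fun l' => Φ (r x :: l')) l

variable {M M' M'' : Type*}

@[simp] theorem del_nil (Φ : Co M) : del Φ [] = 0 := by simp [del]
theorem del_cons (Φ : Co M) (x : M) (l : List M) :
    del Φ (x :: l) = Φ l + del (fun l' => Φ (x :: l')) l := by simp [del]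
@[simp] theorem pr_nil (r s : M → M') (Φ : Co M') : pr r s Φ [] = 0 := by simp [pr]
theorem pr_cons (r s : M → M') (Φ : Co M') (x : M) (l : List M) :
    pr r s Φ (x :: l) = Φ (r x :: s x :: l.map s) + pr r s (fun l' => Φ (r x :: l')) l := by
  simp [pr]

theorem del_add (Φ Ψ : Co M) (l : List M) : del (Φ + Ψ) l = del Φ l + del Ψ l := by
  induction l generalizing Φ Ψ with
  | nil => simp
  | cons x l ih =>
    have := ih (fun l' => Φ (x :: l')) (fun l' => Ψ (x :: l'))
    simp only [del_cons, Pi.add_apply]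
    have e : (fun l' => Φ (x :: l') + Ψ (x :: l')) =
      (fun l' => Φ (x :: l')) + (fun l' => Ψ (x :: l')) := rfl
    rw [e, this]; ring

theorem del_smul (c : ZMod 2) (Φ : Co M) (l : List M) :
    del (fun l => c * Φ l) l = c * del Φ l := by
  induction l generalizing Φ with
  | nil => simp
  | cons x l ih => simp only [del_cons, ih]; ring

theorem pr_add (r s : M → M') (Φ Ψ : Co M') (l : List M) :
    pr r s (Φ + Ψ) l = pr r s Φ l + pr r s Ψ l := by
  induction l generalizing Φ Ψ with
  | nil => simp
  | cons x l ih =>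
    have := ih (fun l' => Φ (r x :: l')) (fun l' => Ψ (r x :: l'))
    simp only [pr_cons, Pi.add_apply]
    have e : (fun l' => Φ (r x :: l') + Ψ (r x :: l')) =
      (fun l' => Φ (r x :: l')) + (fun l' => Ψ (r x :: l')) := rfl
    rw [e, this]; ring

theorem pr_smul (r s : M → M') (c : ZMod 2) (Φ : Co M') (l : List M) :
    pr r s (fun l => c * Φ l) l = c * pr r s Φ l := by
  induction l generalizing Φ with
  | nil => simp
  | cons x l ih => simp only [pr_cons, ih]; ring

theorem del_del (Φ : Co M) (l : List M) : del (del Φ) l = 0 := by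
  induction l generalizing Φ with
  | nil => simp
  | cons x l ih =>
    rw [del_cons]
    have e : (fun l' => del Φ (x :: l')) = Φ + del (fun l' => Φ (x :: l')) := by
      funext l'; simp [del_cons]
    rw [e, del_add, ih, add_zero, z2]

theorem del_pb (r : M → M') (Φ : Co M') (l : List M) : del (pb r Φ) l = del Φ (l.map r) := by
  induction l generalizing Φ with
  | nil => simp
  | cons x l ih =>
    rw [del_cons, List.map_cons, del_cons, ← ih]; rfl

theorem prism (r s : M → M') (Φ : Co M') (l : List M) :
    del (pr r s Φ) l + pr r s (del Φ) l = Φ (l.map r) + Φ (l.map s) := by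
  induction l generalizing Φ with
  | nil => simp [z2]
  | cons x l ih =>
    have h := ih (fun l' => Φ (r x :: l'))
    rw [del_cons, pr_cons, del_cons, del_cons]
    have e1 : (fun l' => pr r s Φ (x :: l')) =
        pb s (fun l' => Φ (r x :: s x :: l')) + pr r s (fun l' => Φ (r x :: l')) := by
      funext l'; simp [pr_cons, pb]
    have e2 : (fun l' => del Φ (r x :: l')) = Φ + del (fun l' => Φ (r x :: l')) := by
      funext l'; simp [del_cons]
    rw [e1, e2, del_add, pr_add, del_pb, List.map_cons, List.map_cons]
    linear_combination h + z2 (pr r s Φ l) +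
      z2 (del (fun l' => Φ (r x :: s x :: l')) (l.map s)) + z2 (Φ (r x :: l.map s))

theorem pr_comp (r s : M' → M'') (f : M → M') (Φ : Co M'') (l : List M) :
    pr r s Φ (l.map f) = pr (r ∘ f) (s ∘ f) Φ l := by
  induction l generalizing Φ with
  | nil => simp
  | cons x l ih => simp [pr_cons, ih]

/-- congruence for `del` -/
theorem del_congr {Φ Ψ : Co M} {l : List M}
    (h : ∀ l' : List M, l'.Sublist l → l'.length + 1 = l.length → Φ l' = Ψ l') :
    del Φ l = del Ψ l := by
  induction l generalizing Φ Ψ with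
  | nil => simp
  | cons x l ih =>
    rw [del_cons, del_cons, h l (List.sublist_cons_self x l) (by simp)]
    congr 1
    apply ih
    intro l' h1 h2
    exact h _ (h1.cons_cons x) (by simp [h2])

theorem del_zero (l : List M) : del (fun _ => (0 : ZMod 2)) l = 0 := by
  induction l with
  | nil => simp
  | cons x l ih => simp [del_cons, ih]

theorem del_eq_zero {Φ : Co M} {l : List M}
    (h : ∀ l' : List M, l'.Sublist l → l'.length + 1 = l.length → Φ l' = 0) :
    del Φ l = 0 := by
  rw [del_congr (Ψ := fun _ => 0) h, del_zero]

theorem pr_congr {r s : M → M'} {Φ Ψ : Co M'} {l : List M}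
    (h : ∀ l' : List M', l'.length = l.length + 1 →
      (∀ z ∈ l', ∃ x ∈ l, z = r x ∨ z = s x) → (∀ x ∈ l, r x ∈ l' ∨ s x ∈ l') → Φ l' = Ψ l') :
    pr r s Φ l = pr r s Ψ l := by
  induction l generalizing Φ Ψ with
  | nil => simp
  | cons x l ih =>
    rw [pr_cons, pr_cons, h]
    · congr 1
      apply ih
      intro l' h1 h2 h3
      apply h
      · simp [h1]
      · intro z hz
        rcases List.mem_cons.1 hz with rfl | hz
        · exact ⟨x, by simp, Or.inl rfl⟩
        · obtain ⟨y, hy, h⟩ := h2 z hz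
          exact ⟨y, by simp [hy], h⟩
      · intro y hy
        rcases List.mem_cons.1 hy with rfl | hy
        · simp
        · rcases h3 y hy with h | h <;> simp [h]
    · simp
    · intro z hz
      simp only [List.mem_cons, List.mem_map] at hz
      rcases hz with rfl | rfl | ⟨y, hy, rfl⟩
      · exact ⟨x, by simp⟩
      · exact ⟨x, by simp⟩
      · exact ⟨y, by simp [hy]⟩
    · intro y hy
      rcases List.mem_cons.1 hy with rfl | hy
      · simp
      · right; simp only [List.mem_cons, List.mem_map]; exact Or.inr (Or.inr ⟨y, hy, rfl⟩)

theorem pr_zero (r s : M → M') (l : List M) : pr r s (fun _ => (0 : ZMod 2)) l = 0 := by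
  induction l with
  | nil => simp
  | cons x l ih => simp [pr_cons, ih]

theorem pr_eq_zero {r s : M → M'} {Φ : Co M'} {l : List M}
    (h : ∀ l' : List M', l'.length = l.length + 1 →
      (∀ z ∈ l', ∃ x ∈ l, z = r x ∨ z = s x) → (∀ x ∈ l, r x ∈ l' ∨ s x ∈ l') → Φ l' = 0) :
    pr r s Φ l = 0 := by
  rw [pr_congr (Ψ := fun _ => 0) h, pr_zero]

/-- `l` has pairwise distances `< ε`. -/
def Sm [PseudoMetricSpace M] (ε : ℝ) (l : List M) : Prop := ∀ x ∈ l, ∀ y ∈ l, dist x y < ε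

theorem Sm.mono [PseudoMetricSpace M] {ε ε' : ℝ} (h : ε ≤ ε') {l : List M} (hl : Sm ε l) :
    Sm ε' l := fun x hx y hy => (hl x hx y hy).trans_le h

theorem Sm.sub [PseudoMetricSpace M] {ε : ℝ} {l l' : List M} (hl : Sm ε l) (h : l'.Sublist l) :
    Sm ε l' := fun x hx y hy => hl x (h.subset hx) y (h.subset hy)

/-! ### the Sperner cocycle -/

/-- indicator of the enumerations of `S` -/
def gg {C : Type*} [DecidableEq C] : Finset C → Co C
  | S, [] => if S = ∅ then 1 else 0
  | S, x :: l => if x ∈ S then gg (S.erase x) l else 0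

theorem gg_ne {C : Type*} [DecidableEq C] {S : Finset C} {l : List C} (h : gg S l ≠ 0) :
    l.Nodup ∧ (∀ x, x ∈ l ↔ x ∈ S) := by
  induction l generalizing S with
  | nil =>
    have : S = ∅ := by by_contra hS; simp [gg, hS] at h
    simp [this]
  | cons x l ih =>
    by_cases hx : x ∈ S
    · simp only [gg, hx, if_true] at h
      obtain ⟨h1, h2⟩ := ih h
      refine ⟨List.nodup_cons.2 ⟨?_, h1⟩, ?_⟩
      · rw [h2]; simp
      · intro y
        rw [List.mem_cons, h2, Finset.mem_erase]
        by_cases hy : y = x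
        · simp [hy, hx]
        · simp [hy]
    · simp [gg, hx] at h

theorem gg_del {C : Type*} [DecidableEq C] [Fintype C] (S : Finset C) (l : List C) :
    del (gg S) l = ∑ y ∈ Finset.univ \ S, gg (insert y S) l := by
  induction l generalizing S with
  | nil =>
    simp [gg]
  | cons x l ih =>
    rw [del_cons]
    by_cases hx : x ∈ S
    · have e : (fun l' => gg S (x :: l')) = gg (S.erase x) := by funext l'; simp [gg, hx]
      rw [e, ih]
      have e2 : Finset.univ \ S.erase x = insert x (Finset.univ \ S) := by
        ext y; by_cases hy : y = x <;> simp [hy]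
      rw [e2, Finset.sum_insert (by simp [hx]), Finset.insert_erase hx, ← add_assoc, z2, zero_add]
      apply Finset.sum_congr rfl
      intro y hy
      have hyS : y ∉ S := by simpa using hy
      have : x ∈ insert y S := by simp [hx]
      have hne : x ≠ y := fun h => hyS (h ▸ hx)
      simp only [gg, this, if_true]
      rw [Finset.erase_insert_of_ne hne.symm]
    · have e : (fun l' => gg S (x :: l')) = fun _ => 0 := by funext l'; simp [gg, hx]
      rw [e, del_zero, add_zero]
      rw [Finset.sum_eq_single x]
      · simp [gg, Finset.erase_insert hx]
      · intro y hy hyx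
        have : x ∉ insert y S := by simp [hx, hyx.symm]
        simp [gg, this]
      · intro h; simp [hx] at h

theorem gg_univ_del {C : Type*} [DecidableEq C] [Fintype C] (l : List C) :
    del (gg (Finset.univ : Finset C)) l = 0 := by
  rw [gg_del]; simp

theorem gg_succ {n : ℕ} (S : Finset (Fin n)) (l : List (Fin n)) :
    gg (S.map (Fin.succEmb n)) (l.map Fin.succ) = gg S l := by
  induction l generalizing S with
  | nil => simp [gg]
  | cons x l ih =>
    have : (S.map (Fin.succEmb n)).erase x.succ = (S.erase x).map (Fin.succEmb n) := by
      rw [Finset.map_erase]; rfl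
    have h2 : x.succ ∈ S.map (Fin.succEmb n) ↔ x ∈ S := by
      rw [← Fin.coe_succEmb]; exact Finset.mem_map' _
    simp only [List.map_cons, gg, this, ih, h2]

/-- index of the first negative coordinate (`n` if there is none) -/
def col : {n : ℕ} → (Fin n → ℝ) → Fin (n + 1)
  | 0, _ => 0
  | _ + 1, x => if x 0 < 0 then 0 else (col (Fin.tail x)).succ

theorem col_zero (x : Fin 0 → ℝ) : col x = 0 := by simp [col]
theorem col_succ {n : ℕ} (x : Fin (n + 1) → ℝ) :
    col x = if x 0 < 0 then 0 else (col (Fin.tail x)).succ := by rw [col]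

theorem col_last {n : ℕ} (x : Fin n → ℝ) (h : col x = Fin.last n) (i : Fin n) : 0 ≤ x i := by
  induction n with
  | zero => exact i.elim0
  | succ n ih =>
    rw [col_succ] at h
    by_cases hx : x 0 < 0
    · simp only [hx, if_true] at h
      exact absurd h.symm (Fin.last_pos.ne')
    · simp only [hx, if_false] at h
      rw [← Fin.succ_last] at h
      have := ih (Fin.tail x) (Fin.succ_injective _ h)
      refine Fin.cases (not_lt.1 hx) (fun j => this j) i

theorem col_castSucc {n : ℕ} (x : Fin n → ℝ) (i : Fin n) (h : col x = i.castSucc) : x i < 0 := by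
  induction n with
  | zero => exact i.elim0
  | succ n ih =>
    rw [col_succ] at h
    by_cases hx : x 0 < 0
    · simp only [hx, if_true] at h
      have : i = 0 := by
        rw [← Fin.castSucc_zero] at h; exact (Fin.castSucc_injective _ h).symm
      rwa [this]
    · simp only [hx, if_false] at h
      revert h
      refine Fin.cases (fun h => ?_) (fun j h => ?_) i
      · simp at h
      · rw [← Fin.succ_castSucc] at h
        exact ih (Fin.tail x) j (Fin.succ_injective _ h)

/-- the Sperner cocycle of `ℝ^n` at `p` -/
def th {n : ℕ} (p : Fin n → ℝ) : Co (Fin n → ℝ) :=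
  fun l => gg Finset.univ (l.map fun x => col (x - p))

theorem th_del {n : ℕ} (p : Fin n → ℝ) (l : List (Fin n → ℝ)) : del (th p) l = 0 := by
  have : th p = pb (fun x => col (x - p)) (gg Finset.univ) := rfl
  rw [this, del_pb, gg_univ_del]

theorem th_nodup {n : ℕ} {p : Fin n → ℝ} {l : List (Fin n → ℝ)} (h : th p l ≠ 0) : l.Nodup :=
  List.Nodup.of_map _ (gg_ne h).1

theorem th_supp {n : ℕ} {p : Fin n → ℝ} {l : List (Fin n → ℝ)} {ε : ℝ} (hε : 0 < ε)
    (hl : Sm ε l) (h : th p l ≠ 0) : ∀ x ∈ l, dist x p < ε := by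
  have h2 := (gg_ne h).2
  intro x hx
  rw [dist_pi_lt_iff hε]
  intro i
  have h3 := (h2 (Fin.last n)).2 (by simp)
  have h4 := (h2 i.castSucc).2 (by simp)
  rw [List.mem_map] at h3 h4
  obtain ⟨u, hu, hu'⟩ := h3
  obtain ⟨v, hv, hv'⟩ := h4
  have a1 := col_last _ hu' i
  have a2 := col_castSucc _ _ hv'
  have b1 := (dist_pi_lt_iff hε).1 (hl x hx u hu) i
  have b2 := (dist_pi_lt_iff hε).1 (hl x hx v hv) i
  rw [Real.dist_eq, abs_lt] at *
  simp only [Pi.sub_apply] at a1 a2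
  constructor <;> linarith [b1.1, b1.2, b2.1, b2.2]

end AS

end Part1

section Part2

namespace AS
variable {M M' M'' : Type*}

/-- telescoped prism -/
def tp (ρ : ℕ → M → M') (m : ℕ) (Φ : Co M') : Co M :=
  fun l => ∑ a ∈ Finset.range m, pr (ρ a) (ρ (a + 1)) Φ l

theorem tp_zero' (ρ : ℕ → M → M') (Φ : Co M') : tp ρ 0 Φ = fun _ => 0 := by
  funext l; simp [tp]

theorem tp_succ (ρ : ℕ → M → M') (m : ℕ) (Φ : Co M') :
    tp ρ (m + 1) Φ = tp ρ m Φ + pr (ρ m) (ρ (m + 1)) Φ := by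
  funext l; simp [tp, Finset.sum_range_succ]

theorem tp_nil (ρ : ℕ → M → M') (m : ℕ) (Φ : Co M') : tp ρ m Φ [] = 0 := by simp [tp]

theorem tele (ρ : ℕ → M → M') (m : ℕ) (Φ : Co M') (l : List M) :
    del (tp ρ m Φ) l + tp ρ m (del Φ) l = Φ (l.map (ρ 0)) + Φ (l.map (ρ m)) := by
  induction m with
  | zero => simp [tp_zero', del_zero, z2]
  | succ m ih =>
    rw [tp_succ, tp_succ, del_add, Pi.add_apply]
    have := prism (ρ m) (ρ (m + 1)) Φ l
    linear_combination ih + this + z2 (Φ (l.map (ρ m)))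

theorem tp_lin (ρ : ℕ → M → M') (m : ℕ) (Φ Ψ : Co M') (c d : ZMod 2) (l : List M) :
    tp ρ m (fun l => c * Φ l + d * Ψ l) l = c * tp ρ m Φ l + d * tp ρ m Ψ l := by
  have e : (fun l => c * Φ l + d * Ψ l) = (fun l => c * Φ l) + (fun l => d * Ψ l) := rfl
  simp only [tp, e, pr_add, pr_smul, Finset.sum_add_distrib, Finset.mul_sum]

theorem del_lin (Φ Ψ : Co M) (c d : ZMod 2) (l : List M) :
    del (fun l => c * Φ l + d * Ψ l) l = c * del Φ l + d * del Ψ l := by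
  have e : (fun l => c * Φ l + d * Ψ l) = (fun l => c * Φ l) + (fun l => d * Ψ l) := rfl
  simp only [e, del_add, del_smul]

theorem tp_comp (ρ : ℕ → M' → M'') (f : M → M') (m : ℕ) (Φ : Co M'') (l : List M) :
    tp ρ m Φ (l.map f) = tp (fun a => ρ a ∘ f) m Φ l := by
  simp [tp, pr_comp]

/-- vanishing on small lists of length `k` reaching out of the ball of radius `R` -/
def Supp {n : ℕ} (R ε : ℝ) (k : ℕ) (Φ : Co (Fin n → ℝ)) : Prop :=
  ∀ l, l.length = k → Sm ε l → (∃ z ∈ l, R ≤ ‖z‖) → Φ l = 0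

def cn {n : ℕ} (a : ℝ) (y : Fin n → ℝ) : Fin (n + 1) → ℝ := Fin.cons a y

theorem cn_dist {n : ℕ} {a b : ℝ} {y z : Fin n → ℝ} {ε : ℝ} (hε : 0 < ε) (h : |a - b| < ε)
    (h2 : dist y z < ε) : dist (cn a y) (cn b z) < ε := by
  rw [dist_pi_lt_iff hε] at *
  intro i
  refine Fin.cases ?_ (fun j => ?_) i
  · simpa [cn, Real.dist_eq] using h
  · simpa [cn] using h2 j

theorem cn_norm_left {n : ℕ} (a : ℝ) (y : Fin n → ℝ) : |a| ≤ ‖cn a y‖ := by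
  simpa [cn] using norm_le_pi_norm (cn a y) 0

theorem tail_norm {n : ℕ} (z : Fin (n + 1) → ℝ) : ‖Fin.tail z‖ ≤ ‖z‖ := by
  rw [pi_norm_le_iff_of_nonneg (norm_nonneg _)]
  intro i; exact norm_le_pi_norm z i.succ

theorem cn_norm_right {n : ℕ} (a : ℝ) (y : Fin n → ℝ) : ‖y‖ ≤ ‖cn a y‖ := by
  simpa [cn] using tail_norm (cn a y)

theorem tail_dist {n : ℕ} (z w : Fin (n + 1) → ℝ) : dist (Fin.tail z) (Fin.tail w) ≤ dist z w := by
  rw [dist_pi_le_iff dist_nonneg]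
  intro i; exact dist_le_pi_dist z w i.succ

theorem grid (R ε : ℝ) (hR : 0 < R) (hε : 0 < ε) : ∃ (m : ℕ) (s : ℕ → ℝ), s 0 = -R ∧ s m = R ∧
    (∀ a, |s a - s (a + 1)| < ε) ∧ Monotone s := by
  obtain ⟨m, hm⟩ := exists_nat_gt (2 * R / ε)
  have hm0 : (0 : ℝ) < m := lt_trans (by positivity) hm
  refine ⟨m, fun a => -R + a * (2 * R / m), by simp, ?_, ?_, ?_⟩
  · field_simp; ring
  · intro a
    push_cast
    have : -R + a * (2 * R / m) - (-R + (a + 1) * (2 * R / m)) = - (2 * R / m) := by ring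
    rw [this, abs_neg, abs_of_pos (by positivity), div_lt_iff₀ hm0]
    rw [div_lt_iff₀ hε] at hm; linarith
  · apply monotone_nat_of_le_succ
    intro a
    push_cast
    have : (0:ℝ) ≤ 2 * R / m := by positivity
    nlinarith

theorem col_cn {n : ℕ} (a : ℝ) (y : Fin n → ℝ) :
    col (cn a y) = if a < 0 then 0 else (col y).succ := by
  rw [col_succ]; simp [cn]

theorem univ_erase {n : ℕ} : (Finset.univ : Finset (Fin (n + 1))).erase 0 =
    Finset.univ.map (Fin.succEmb n) := by
  ext i
  refine Fin.cases ?_ (fun j => ?_) i <;> simp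

theorem th0 {n : ℕ} (l : List (Fin n → ℝ)) : th 0 l = gg Finset.univ (l.map col) := by
  simp [th]

theorem pr_th {n : ℕ} (a b : ℝ) (hab : a ≤ b) (l : List (Fin n → ℝ)) (hl : l.length = n + 1) :
    pr (cn a) (cn b) (th 0) l = if a < 0 ∧ 0 ≤ b then th 0 l else 0 := by
  by_cases hb : b < 0
  · have ha : a < 0 := hab.trans_lt hb
    rw [if_neg (by simp [hb])]
    apply pr_eq_zero
    intro l' h1 h2 _
    by_contra hne
    rw [th0] at hne
    have hn := (gg_ne hne).1
    have hz : ∀ z ∈ l', col z = 0 := by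
      intro z hz
      obtain ⟨x, _, rfl | rfl⟩ := h2 z hz <;> simp [col_cn, ha, hb]
    match l', h1, hn, hz with
    | u :: v :: l'', _, hn, hz =>
      have hu := hz u (by simp)
      have hv := hz v (by simp)
      simp [hu, hv] at hn
    | [u], h1, _, _ => simp [hl] at h1
    | [], h1, _, _ => simp at h1
  by_cases ha : a < 0
  · rw [if_pos ⟨ha, not_lt.1 hb⟩]
    match l, hl with
    | y :: l, hl =>
      rw [pr_cons]
      have h2 : pr (cn a) (cn b) (fun l' => th 0 (cn a y :: l')) l = 0 := by
        match l with
        | [] => simp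
        | y1 :: l1 =>
          have key : ∀ l2 : List (Fin (n+1) → ℝ), th 0 (cn a y :: cn a y1 :: l2) = 0 := by
            intro l2
            by_contra hne
            rw [th0] at hne
            have hn := (gg_ne hne).1
            simp [col_cn, ha] at hn
          rw [pr_cons, key, zero_add]
          apply pr_eq_zero
          intro l' _ _ _
          exact key l'
      rw [h2, add_zero, th0, th0]
      have e : (cn a y :: cn b y :: l.map (cn b)).map col = 0 :: ((y :: l).map col).map Fin.succ := by
        simp [col_cn, ha, hb, Function.comp_def]
      rw [e]
      simp only [gg, Finset.mem_univ, if_true, univ_erase, gg_succ]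
  · rw [if_neg (by simp [ha])]
    apply pr_eq_zero
    intro l' h1 h2 _
    by_contra hne
    rw [th0] at hne
    have hn := ((gg_ne hne).2 0).2 (by simp)
    rw [List.mem_map] at hn
    obtain ⟨z, hz, hz'⟩ := hn
    obtain ⟨x, _, rfl | rfl⟩ := h2 z hz <;> simp [col_cn, ha, hb] at hz'

theorem tp_th {n : ℕ} (s : ℕ → ℝ) (hs : Monotone s) (h0 : s 0 < 0) (m : ℕ)
    (l : List (Fin n → ℝ)) (hl : l.length = n + 1) :
    tp (fun a => cn (s a)) m (th 0) l = if s m < 0 then 0 else th 0 l := by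
  induction m with
  | zero => simp [tp, h0]
  | succ m ih =>
    rw [tp_succ, Pi.add_apply, ih, pr_th _ _ (hs (Nat.le_succ m)) _ hl]
    have := hs (Nat.le_succ m)
    by_cases h1 : s m < 0
    · by_cases h2 : s (m + 1) < 0
      · simp [h1, h2]
      · simp [h1, h2, not_lt.1 h2]
    · have h2 : ¬ s (m + 1) < 0 := by
        simp only [not_lt] at *; exact h1.trans this
      simp [h1, h2]

/-- prism lists between nearby slices are small -/
theorem Sm_prism [PseudoMetricSpace M] [PseudoMetricSpace M'] {r s : M → M'} {ε ε' : ℝ}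
    {l : List M} {l' : List M'} (hl : Sm ε l)
    (h : ∀ x y, dist x y < ε → dist (r x) (r y) < ε' ∧ dist (r x) (s y) < ε' ∧
      dist (s x) (s y) < ε') (h2 : ∀ z ∈ l', ∃ x ∈ l, z = r x ∨ z = s x) : Sm ε' l' := by
  intro z hz w hw
  obtain ⟨x, hx, hx'⟩ := h2 z hz
  obtain ⟨y, hy, hy'⟩ := h2 w hw
  have a := h x y (hl x hx y hy)
  have b := h y x (hl y hy x hx)
  rcases hx' with rfl | rfl <;> rcases hy' with rfl | rfl
  · exact a.1
  · exact a.2.1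
  · rw [dist_comm]; exact b.2.1
  · exact a.2.2

theorem tp_eq_zero {ρ : ℕ → M → M'} {m : ℕ} {Φ : Co M'} {l : List M}
    (h : ∀ a < m, ∀ l' : List M', l'.length = l.length + 1 →
      (∀ z ∈ l', ∃ x ∈ l, z = ρ a x ∨ z = ρ (a+1) x) →
      (∀ x ∈ l, ρ a x ∈ l' ∨ ρ (a+1) x ∈ l') → Φ l' = 0) :
    tp ρ m Φ l = 0 :=
  Finset.sum_eq_zero fun a ha => pr_eq_zero (h a (Finset.mem_range.1 ha))

theorem tp_congr {ρ : ℕ → M → M'} {m : ℕ} {Φ Ψ : Co M'} {l : List M}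
    (h : ∀ a < m, ∀ l' : List M', l'.length = l.length + 1 →
      (∀ z ∈ l', ∃ x ∈ l, z = ρ a x ∨ z = ρ (a+1) x) →
      (∀ x ∈ l, ρ a x ∈ l' ∨ ρ (a+1) x ∈ l') → Φ l' = Ψ l') :
    tp ρ m Φ l = tp ρ m Ψ l :=
  Finset.sum_congr rfl fun a ha => pr_congr (h a (Finset.mem_range.1 ha))

theorem Sm_cn {n : ℕ} {s : ℕ → ℝ} {ε : ℝ} (hε : 0 < ε) (hs : ∀ a, |s a - s (a + 1)| < ε) (a : ℕ)
    {l : List (Fin n → ℝ)} {l' : List (Fin (n + 1) → ℝ)} (hl : Sm ε l)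
    (h2 : ∀ z ∈ l', ∃ x ∈ l, z = cn (s a) x ∨ z = cn (s (a + 1)) x) : Sm ε l' := by
  apply Sm_prism hl _ h2
  intro x y hxy
  exact ⟨cn_dist hε (by simpa using hε) hxy, cn_dist hε (hs a) hxy,
    cn_dist hε (by simpa using hε) hxy⟩

theorem tp_cn_supp {n : ℕ} {s : ℕ → ℝ} {R ε : ℝ} (hε : 0 < ε) (hs : ∀ a, |s a - s (a + 1)| < ε)
    (m k : ℕ) {Φ : Co (Fin (n + 1) → ℝ)} (h : Supp R ε (k + 1) Φ) :
    Supp R ε k (tp (fun a => cn (s a)) m Φ) := by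
  intro l hl hsm ⟨z, hz, hR⟩
  apply tp_eq_zero
  intro a _ l' h1 h2 h3
  apply h l' (by rw [h1, hl]) (Sm_cn hε hs a hsm h2)
  rcases h3 z hz with h | h
  · exact ⟨_, h, hR.trans (cn_norm_right _ _)⟩
  · exact ⟨_, h, hR.trans (cn_norm_right _ _)⟩

theorem thA0 {n : ℕ} (Ψ : Co (Fin n → ℝ)) (R ε : ℝ) (hR : 0 < R) (hε : 0 < ε) (h0 : Ψ [] = 0)
    (hs : Supp R ε n Ψ) (hd : ∀ l, l.length = n + 1 → Sm ε l → del Ψ l = th 0 l) : False := by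
  induction n with
  | zero =>
    have := hd [0] rfl (by intro x hx y hy; simp at hx hy; simp [hx, hy, hε])
    rw [del_cons, h0, th0, List.map_cons, col_zero, List.map_nil] at this
    simp [gg] at this
  | succ n ih =>
    obtain ⟨m, s, s0, sm, hst, hmono⟩ := grid R ε hR hε
    apply ih (tp (fun a => cn (s a)) m Ψ) (tp_nil _ _ _) (tp_cn_supp hε hst m n hs)
    intro l hl hsm
    have e := tele (fun a => cn (s a)) m Ψ l
    have e1 : tp (fun a => cn (s a)) m (del Ψ) l = th 0 l := by
      have := tp_th s hmono (by rw [s0]; linarith) m l hl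
      rw [sm, if_neg (by linarith)] at this
      rw [← this]
      apply tp_congr
      intro a _ l' h1 h2 _
      exact hd l' (by rw [h1, hl]) (Sm_cn hε hst a hsm h2)
    have key : ∀ b, |s b| = R → Ψ (l.map (cn (s b))) = 0 := by
      intro b hb
      apply hs _ (by simp [hl])
      · intro x hx y hy
        rw [List.mem_map] at hx hy
        obtain ⟨x, hx, rfl⟩ := hx
        obtain ⟨y, hy, rfl⟩ := hy
        exact cn_dist hε (by simpa using hε) (hsm x hx y hy)
      · match l, hl with
        | y :: l, _ => exact ⟨cn (s b) y, by simp, hb ▸ cn_norm_left _ _⟩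
    rw [key 0 (by rw [s0, abs_neg, abs_of_pos hR]), key m (by rw [sm, abs_of_pos hR]), e1] at e
    have := z2 (th 0 l)
    linear_combination e - this

theorem Supp.mono {n : ℕ} {R R' ε ε' : ℝ} {k : ℕ} {Φ : Co (Fin n → ℝ)} (h : Supp R ε k Φ)
    (hR : R ≤ R') (hε : ε' ≤ ε) : Supp R' ε' k Φ :=
  fun l hl hs ⟨z, hz, hz'⟩ => h l hl (hs.mono hε) ⟨z, hz, hR.trans hz'⟩

/-- The Sperner cocycle at `p` is not a compactly supported coboundary. -/
theorem thA {n : ℕ} (p : Fin n → ℝ) (Ψ : Co (Fin n → ℝ)) (R ε : ℝ) (hε : 0 < ε) (h0 : Ψ [] = 0)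
    (hs : Supp R ε n Ψ) (hd : ∀ l, l.length = n + 1 → Sm ε l → del Ψ l = th p l) : False := by
  have hsm : ∀ l : List (Fin n → ℝ), Sm ε l → Sm ε (l.map (· + p)) := by
    intro l hl x hx y hy
    rw [List.mem_map] at hx hy
    obtain ⟨x, hx, rfl⟩ := hx
    obtain ⟨y, hy, rfl⟩ := hy
    simpa using hl x hx y hy
  apply thA0 (pb (· + p) Ψ) (|R| + ‖p‖ + 1) ε (by positivity) hε (by simpa [pb] using h0)
  · intro l hl hs' ⟨z, hz, hz'⟩
    apply hs _ (by simp [hl]) (hsm l hs')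
    refine ⟨z + p, List.mem_map.2 ⟨z, hz, rfl⟩, ?_⟩
    have := norm_sub_le (z + p) p
    rw [add_sub_cancel_right] at this
    linarith [le_abs_self R]
  · intro l hl hs'
    rw [del_pb, hd _ (by simp [hl]) (hsm l hs')]
    simp [th, Function.comp_def]

end AS

end Part2

section Part3

namespace AS

def tl {n : ℕ} (z : Fin (n + 1) → ℝ) : Fin n → ℝ := Fin.tail z

theorem tl_cn {n : ℕ} (a : ℝ) (y : Fin n → ℝ) : tl (cn a y) = y := by simp [tl, cn]
theorem cn_zero {n : ℕ} (a : ℝ) (y : Fin n → ℝ) : cn a y 0 = a := by simp [cn]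
theorem cn_eta {n : ℕ} (z : Fin (n + 1) → ℝ) : cn (z 0) (tl z) = z := by simp [tl, cn]

/-- clip the first coordinate -/
def clip {n : ℕ} (s : ℝ) (z : Fin (n + 1) → ℝ) : Fin (n + 1) → ℝ := cn (min (z 0) s) (tl z)

theorem clip_of_le {n : ℕ} {s : ℝ} {z : Fin (n + 1) → ℝ} (h : z 0 ≤ s) : clip s z = z := by
  rw [clip, min_eq_left h, cn_eta]

theorem clip_of_ge {n : ℕ} {s : ℝ} {z : Fin (n + 1) → ℝ} (h : s ≤ z 0) :
    clip s z = cn s (tl z) := by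
  rw [clip, min_eq_right h]

theorem clip_dist {n : ℕ} {s t ε : ℝ} (hst : |s - t| < ε) {z w : Fin (n + 1) → ℝ}
    (h : dist z w < ε) : dist (clip s z) (clip t w) < ε := by
  have hε : 0 < ε := dist_nonneg.trans_lt h
  apply cn_dist hε
  · have h0 : dist (z 0) (w 0) < ε := (dist_le_pi_dist z w 0).trans_lt h
    rw [Real.dist_eq] at h0
    exact (abs_min_sub_min_le_max _ _ _ _).trans_lt (max_lt h0 hst)
  · exact (tail_dist z w).trans_lt h

theorem norm_cases {n : ℕ} {R : ℝ} (hR : 0 < R) {z : Fin (n + 1) → ℝ} (h : R ≤ ‖z‖) :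
    R ≤ z 0 ∨ z 0 ≤ -R ∨ R ≤ ‖tl z‖ := by
  by_contra! hc
  obtain ⟨h1, h2, h3⟩ := hc
  apply absurd h
  rw [not_le, pi_norm_lt_iff hR]
  intro i
  refine Fin.cases ?_ (fun j => ?_) i
  · rw [Real.norm_eq_abs, abs_lt]; exact ⟨h2, h1⟩
  · exact (norm_le_pi_norm (tl z) j).trans_lt h3

theorem Sm_clip {n : ℕ} {ε : ℝ} {s : ℕ → ℝ} (hs : ∀ a, |s a - s (a + 1)| < ε) (hε : 0 < ε) (a : ℕ)
    {l l' : List (Fin (n + 1) → ℝ)} (hl : Sm ε l)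
    (h2 : ∀ z ∈ l', ∃ x ∈ l, z = clip (s a) x ∨ z = clip (s (a + 1)) x) : Sm ε l' := by
  apply Sm_prism hl _ h2
  intro x y hxy
  exact ⟨clip_dist (by simpa using hε) hxy, clip_dist (hs a) hxy, clip_dist (by simpa using hε) hxy⟩

theorem Sm_map {M M' : Type*} [PseudoMetricSpace M] [PseudoMetricSpace M'] {f : M → M'} {ε ε' : ℝ}
    {l : List M} (hl : Sm ε l) (h : ∀ x ∈ l, ∀ y ∈ l, dist x y < ε → dist (f x) (f y) < ε') :
    Sm ε' (l.map f) := by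
  intro x hx y hy
  rw [List.mem_map] at hx hy
  obtain ⟨x, hx, rfl⟩ := hx
  obtain ⟨y, hy, rfl⟩ := hy
  exact h x hx y hy (hl x hx y hy)

/-- Poincare lemma step. -/
theorem poincare {n : ℕ} {Φ : Co (Fin (n + 1) → ℝ)} {χ : Co (Fin n → ℝ)} {R R1 R2 ε ε1 : ℝ}
    (hR : 0 < R) (hR1 : R < R1) (hR2 : R1 < R2) (hε : 0 < ε) (hε1 : 0 < ε1)
    {m : ℕ} {s : ℕ → ℝ} (s0 : s 0 = -R) (sm : s m = R) (hst : ∀ a, |s a - s (a + 1)| < ε)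
    (hmono : Monotone s)
    (hc : ∀ l, l.length = n + 3 → Sm ε l → del Φ l = 0) (hsup : Supp R ε (n + 2) Φ)
    (χ0 : χ [] = 0) (χs : Supp R1 ε1 n χ)
    (hχ : ∀ l, l.length = n + 1 → Sm ε1 l → del χ l = tp (fun a => cn (s a)) m Φ l) :
    ∃ ε' > 0, ∃ Ψ : Co (Fin (n + 1) → ℝ), Ψ [] = 0 ∧ Supp R2 ε' (n + 1) Ψ ∧
      ∀ l, l.length = n + 2 → Sm ε' l → del Ψ l = Φ l := by
  classical
  let κ : Co (Fin (n + 1) → ℝ) := fun l => if ∀ z ∈ l, R ≤ z 0 then χ (l.map tl) else 0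
  let Ψ0 : Co (Fin (n + 1) → ℝ) := tp (fun a => clip (s a)) m Φ
  have hε' : 0 < min (min ε ε1) (R2 - R1) := lt_min (lt_min hε hε1) (by linarith)
  have tlm : ∀ l : List (Fin (n + 1) → ℝ), Sm ε1 l → Sm ε1 (l.map tl) := fun l hl =>
    Sm_map hl fun x _ y _ h => (tail_dist x y).trans_lt h
  have clm : ∀ (a : ℝ) (l : List (Fin (n + 1) → ℝ)), Sm ε l → Sm ε (l.map (clip a)) :=
    fun a l hl => Sm_map hl fun x _ y _ h => clip_dist (by simpa using hε) h
  have dΨ0 : ∀ l, l.length = n + 2 → Sm ε l → del Ψ0 l = Φ l := by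
    intro l hl hsm
    have e := tele (fun a => clip (s a)) m Φ l
    have e1 : tp (fun a => clip (s a)) m (del Φ) l = 0 := by
      apply tp_eq_zero
      intro a _ l' h1 h2 _
      exact hc l' (by omega) (Sm_clip hst hε a hsm h2)
    have e2 : Φ (l.map (clip (s 0))) = 0 := by
      apply hsup _ (by simp [hl]) (clm _ _ hsm)
      match l, hl with
      | y :: l, _ =>
        refine ⟨clip (s 0) y, by simp, ?_⟩
        refine le_trans ?_ (cn_norm_left _ _)
        have : min (y 0) (s 0) ≤ -R := (min_le_right _ _).trans s0.le
        rw [abs_of_neg (by linarith)]; linarith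
    have e3 : Φ (l.map (clip (s m))) = Φ l := by
      by_cases h : ∀ z ∈ l, z 0 ≤ s m
      · congr 1
        conv_rhs => rw [← List.map_id l]
        exact List.map_congr_left fun z hz => clip_of_le (h z hz)
      · push Not at h
        obtain ⟨z, hz, hz'⟩ := h
        rw [sm] at hz'
        have h0 : Φ l = 0 := by
          apply hsup l hl hsm ⟨z, hz, ?_⟩
          refine le_trans ?_ (norm_le_pi_norm z 0)
          exact hz'.le.trans (le_abs_self _)
        rw [h0]
        apply hsup _ (by simp [hl]) (clm _ _ hsm)
        refine ⟨clip (s m) z, List.mem_map_of_mem hz, ?_⟩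
        rw [clip_of_ge (by rw [sm]; exact hz'.le)]
        refine le_trans ?_ (cn_norm_left _ _)
        rw [sm]; exact le_abs_self _
    rw [e1, e2, e3] at e
    simpa using e
  refine ⟨min (min ε ε1) (R2 - R1), hε', Ψ0 + del κ, ?_, ?_, ?_⟩
  · simp [Ψ0, tp_nil]
  · intro l hl hsm ⟨z, hz, hz'⟩
    have hsmε := hsm.mono ((min_le_left _ _).trans (min_le_left _ _))
    have hsmε1 := hsm.mono ((min_le_left _ _).trans (min_le_right _ _))
    have hclose : ∀ w ∈ l, dist z w < R2 - R1 := fun w hw =>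
      (hsm z hz w hw).trans_le (min_le_right _ _)
    have hcoord : ∀ w ∈ l, |z 0 - w 0| < R2 - R1 := fun w hw =>
      lt_of_le_of_lt (dist_le_pi_dist z w 0) (hclose w hw)
    rcases norm_cases (by linarith) hz' with h | h | h
    · have hall : ∀ w ∈ l, R ≤ w 0 := by
        intro w hw
        have := (abs_lt.1 (hcoord w hw)).2
        linarith
      have e1 : Ψ0 l = tp (fun a => cn (s a)) m Φ (l.map tl) := by
        rw [tp_comp]
        simp only [Ψ0, tp]
        apply Finset.sum_congr rfl
        intro a ha
        have ha := Finset.mem_range.1 ha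
        have key : ∀ b ≤ m, ∀ w ∈ l, clip (s b) w = (cn (s b) ∘ tl) w := by
          intro b hb w hw
          apply clip_of_ge
          exact (hmono hb).trans (sm.le.trans (hall w hw))
        have : ∀ (l : List (Fin (n + 1) → ℝ)) (r s r' s' : (Fin (n + 1) → ℝ) → (Fin (n + 1) → ℝ))
            (Φ : Co (Fin (n + 1) → ℝ)),
            (∀ w ∈ l, r w = r' w) → (∀ w ∈ l, s w = s' w) → pr r s Φ l = pr r' s' Φ l := by
          intro l
          induction l with
          | nil => intros; simp
          | cons x l ih =>
            intro r s r' s' Φ h1 h2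
            rw [pr_cons, pr_cons, h1 x (by simp), h2 x (by simp),
              ih r s r' s' _ (fun w hw => h1 w (by simp [hw])) (fun w hw => h2 w (by simp [hw])),
              List.map_congr_left (fun w hw => h2 w (by simp [hw]))]
        exact this l _ _ _ _ Φ (key a ha.le) (key (a + 1) ha)
      have e2 : del κ l = del χ (l.map tl) := by
        rw [← del_pb]
        apply del_congr
        intro l' h1 _
        simp only [κ]
        rw [if_pos (fun w hw => hall w (h1.subset hw))]; rfl
      rw [Pi.add_apply, e1, e2, hχ _ (by simp [hl]) (tlm _ hsmε1), z2]
    · have e1 : Ψ0 l = 0 := by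
        apply tp_eq_zero
        intro a _ l' h1 h2 h3
        apply hsup l' (by omega) (Sm_clip hst hε a hsmε h2)
        have hzz : ∀ b, clip (s b) z = z := fun b => clip_of_le (by
          have := hmono (Nat.zero_le b); rw [s0] at this; linarith)
        refine ⟨z, ?_, by linarith⟩
        simpa [hzz] using h3 z hz
      have e2 : del κ l = 0 := by
        apply del_eq_zero
        intro l' h1 h2
        simp only [κ]
        split_ifs with h'
        · match l', h1, h' with
          | [], _, _ => simpa using χ0
          | w :: l'', h1, h' =>
            have a1 := h' w (by simp)
            have a2 := (abs_lt.1 (hcoord w (h1.subset (by simp)))).1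
            exfalso; linarith
        · rfl
      rw [Pi.add_apply, e1, e2, add_zero]
    · have e1 : Ψ0 l = 0 := by
        apply tp_eq_zero
        intro a _ l' h1 h2 h3
        apply hsup l' (by omega) (Sm_clip hst hε a hsmε h2)
        have hzz : ∀ b, R ≤ ‖clip (s b) z‖ := fun b => by
          refine le_trans ?_ (cn_norm_right _ _)
          linarith
        rcases h3 z hz with h | h
        · exact ⟨_, h, hzz _⟩
        · exact ⟨_, h, hzz _⟩
      have e2 : del κ l = 0 := by
        apply del_eq_zero
        intro l' h1 h2
        simp only [κ]
        split_ifs with h'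
        · match l', h1, h2 with
          | [], _, _ => simpa using χ0
          | w :: l'', h1, h2 =>
            apply χs _ (by simp at h2 ⊢; omega) (tlm _ (hsmε1.sub h1))
            refine ⟨tl w, by simp, ?_⟩
            have a2 := (tail_dist z w).trans_lt (hclose w (h1.subset (by simp)))
            have a3 := dist_triangle (tl z) (tl w) 0
            rw [dist_zero_right, dist_zero_right] at a3
            have a4 : dist (tl z) (tl w) < R2 - R1 := a2
            linarith
        · rfl
      rw [Pi.add_apply, e1, e2, add_zero]
  · intro l hl hsm
    rw [del_add, del_del, add_zero]
    exact dΨ0 l hl (hsm.mono ((min_le_left _ _).trans (min_le_left _ _)))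

/-- top degree compactly supported cohomology of `ℝ^n` has rank at most one -/
theorem thB {n : ℕ} (Φ1 Φ2 : Co (Fin n → ℝ)) {R R' ε : ℝ} (hR : 0 < R) (hR' : R < R')
    (hε : 0 < ε) (hc1 : ∀ l, l.length = n + 2 → Sm ε l → del Φ1 l = 0)
    (hc2 : ∀ l, l.length = n + 2 → Sm ε l → del Φ2 l = 0)
    (hs1 : Supp R ε (n + 1) Φ1) (hs2 : Supp R ε (n + 1) Φ2) :
    ∃ c d : ZMod 2, (c ≠ 0 ∨ d ≠ 0) ∧ ∃ ε' > 0, ∃ Ψ : Co (Fin n → ℝ), Ψ [] = 0 ∧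
      Supp R' ε' n Ψ ∧ ∀ l, l.length = n + 1 → Sm ε' l → del Ψ l = c * Φ1 l + d * Φ2 l := by
  induction n generalizing R R' ε with
  | zero =>
    have key : ∀ a b : ZMod 2, ∃ c d : ZMod 2, (c ≠ 0 ∨ d ≠ 0) ∧ c * a + d * b = 0 := by decide
    obtain ⟨c, d, hcd, h⟩ := key (Φ1 [0]) (Φ2 [0])
    refine ⟨c, d, hcd, 1, one_pos, fun _ => 0, rfl, fun _ _ _ _ => rfl, ?_⟩
    intro l hl _
    rw [del_zero]
    match l, hl with
    | [x], _ =>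
      have : x = 0 := Subsingleton.elim _ _
      rw [this, h]
  | succ n ih =>
    obtain ⟨m, s, s0, sm, hst, hmono⟩ := grid R ε hR hε
    have cyc : ∀ Φ : Co (Fin (n + 1) → ℝ), (∀ l, l.length = n + 3 → Sm ε l → del Φ l = 0) →
        Supp R ε (n + 2) Φ → ∀ l, l.length = n + 2 → Sm ε l →
          del (tp (fun a => cn (s a)) m Φ) l = 0 := by
      intro Φ hc hs l hl hsm
      have e := tele (fun a => cn (s a)) m Φ l
      have e1 : tp (fun a => cn (s a)) m (del Φ) l = 0 := by
        apply tp_eq_zero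
        intro a _ l' h1 h2 _
        exact hc l' (by omega) (Sm_cn hε hst a hsm h2)
      have key : ∀ b, |s b| = R → Φ (l.map (cn (s b))) = 0 := by
        intro b hb
        apply hs _ (by simp [hl])
        · exact Sm_map hsm fun x _ y _ h => cn_dist hε (by simpa using hε) h
        · match l, hl with
          | y :: l, _ => exact ⟨cn (s b) y, by simp, hb ▸ cn_norm_left _ _⟩
      rw [key 0 (by rw [s0, abs_neg, abs_of_pos hR]), key m (by rw [sm, abs_of_pos hR]), e1] at e
      simpa using e
    obtain ⟨c, d, hcd, ε1, hε1, χ, χ0, χs, hχ⟩ := ih (R := R) (R' := (R + R') / 2) _ _ hR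
      (by linarith) hε (cyc Φ1 hc1 hs1) (cyc Φ2 hc2 hs2) (tp_cn_supp hε hst m (n + 1) hs1)
      (tp_cn_supp hε hst m (n + 1) hs2)
    refine ⟨c, d, hcd, ?_⟩
    refine poincare (Φ := fun l => c * Φ1 l + d * Φ2 l) (R1 := (R + R') / 2) (R2 := R') hR
      (by linarith) (by linarith) hε hε1 s0 sm hst hmono ?_ ?_ χ0 χs ?_
    · intro l hl hsm
      rw [del_lin, hc1 l hl hsm, hc2 l hl hsm]; simp
    · intro l hl hsm hz
      simp only [hs1 l hl hsm hz, hs2 l hl hsm hz]; simp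
    · intro l hl hsm
      rw [hχ l hl hsm, tp_lin]

end AS

end Part3

section Part4

namespace AS

theorem labels (i : ℕ) {δ : ℝ} (hδ : 0 < δ) : ∃ μ > 0, ∃ L : (Fin i → ℝ) → Fin (i + 1) × (Fin i → ℤ),
    (∀ z w, L z = L w → dist z w ≤ δ) ∧
    ∀ z w, dist z w < μ → (L z).1 = (L w).1 → L z = L w := by
  classical
  have hi : (0 : ℝ) < i + 1 := by positivity
  let t : ℝ → ℝ := fun x => x * (i + 1) / δ
  have hex : ∀ z : Fin i → ℝ, ∃ c : Fin (i + 1), ∀ a, ∀ K : ℤ, round (t (z a)) ≠ c.val + K * (i + 1) := by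
    intro z
    let bad : Fin i → ZMod (i + 1) := fun a => (round (t (z a)) : ℤ)
    have : ∃ c : ZMod (i + 1), c ∉ Finset.univ.image bad := by
      by_contra! h
      have h1 : (Finset.univ.image bad) = Finset.univ := by ext; simp only [h, Finset.mem_univ]
      have h2 := (Finset.card_image_le (s := Finset.univ) (f := bad))
      rw [h1, Finset.card_univ, Finset.card_univ, ZMod.card] at h2
      simp at h2
    obtain ⟨c, hc⟩ := this
    refine ⟨⟨c.val, c.val_lt⟩, fun a K h => hc ?_⟩
    rw [Finset.mem_image]
    refine ⟨a, Finset.mem_univ _, ?_⟩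
    simp only [bad, h]
    have : ((i : ZMod (i + 1)) + 1) = 0 := by
      have := ZMod.natCast_self (i + 1)
      push_cast at this; exact this
    push_cast
    rw [this]; simp
  choose c hc using hex
  refine ⟨δ / (2 * (i + 1)), by positivity,
    fun z => (c z, fun a => ⌊(t (z a) - (c z).val) / (i + 1)⌋), ?_, ?_⟩
  · intro z w h
    simp only [Prod.mk.injEq] at h
    obtain ⟨h1, h2⟩ := h
    rw [dist_pi_le_iff hδ.le]
    intro a
    have h3 := congrFun h2 a
    rw [h1] at h3
    have h4 := Int.abs_sub_lt_one_of_floor_eq_floor h3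
    have e : (t (z a) - (c w).val) / (i + 1) - (t (w a) - (c w).val) / (i + 1) = (z a - w a) / δ := by
      simp only [t]; field_simp; ring
    rw [e, abs_div, abs_of_pos hδ, div_lt_one hδ] at h4
    exact h4.le
  · intro z w h h1
    simp only at h1
    simp only [Prod.mk.injEq]
    refine ⟨h1, ?_⟩
    funext a
    have key : ∀ z w : Fin i → ℝ, dist z w < δ / (2 * (i + 1)) → c z = c w →
        ¬ ⌊(t (z a) - (c z).val) / (i + 1)⌋ < ⌊(t (w a) - (c w).val) / (i + 1)⌋ := by
      intro z w h h1 hlt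
      set K := ⌊(t (w a) - (c w).val) / (i + 1)⌋ with hK
      have h2 : (t (z a) - (c z).val) / (i + 1) < K := Int.floor_lt.1 hlt
      have h3 : (K : ℝ) ≤ (t (w a) - (c w).val) / (i + 1) := Int.floor_le _
      rw [div_lt_iff₀ hi, h1] at h2
      rw [le_div_iff₀ hi] at h3
      have h4 : |z a - w a| < δ / (2 * (i + 1)) := (dist_le_pi_dist z w a).trans_lt h
      have h5 : |t (z a) - t (w a)| < 1 / 2 := by
        have : t (z a) - t (w a) = (z a - w a) * ((i + 1) / δ) := by simp only [t]; ring
        rw [this, abs_mul, abs_of_pos (by positivity : 0 < ((i : ℝ) + 1) / δ)]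
        calc _ < δ / (2 * (i + 1)) * ((i + 1) / δ) := by gcongr
          _ = 1 / 2 := by field_simp
      have h6 := abs_lt.1 h5
      apply hc w a K
      rw [round_eq, Int.floor_eq_iff]
      push_cast
      constructor <;> linarith
    rcases lt_trichotomy (⌊(t (z a) - (c z).val) / (i + 1)⌋) (⌊(t (w a) - (c w).val) / (i + 1)⌋) with h' | h' | h'
    · exact absurd h' (key z w h h1)
    · exact h'
    · exact absurd h' (key w z (by rwa [dist_comm]) h1.symm)

/-- quantitative injectivity on compacta -/
theorem inv_unif {M M' : Type*} [MetricSpace M] [MetricSpace M'] {K : Set M} (hK : IsCompact K)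
    {f : M → M'} (hc : ContinuousOn f K) (hi : InjOn f K) {η : ℝ} (hη : 0 < η) :
    ∃ δ > 0, ∀ x ∈ K, ∀ y ∈ K, dist (f x) (f y) ≤ δ → dist x y < η := by
  have hC : IsCompact ((K ×ˢ K) ∩ {q : M × M | η ≤ dist q.1 q.2}) :=
    (hK.prod hK).inter_right (isClosed_le continuous_const (continuous_fst.dist continuous_snd))
  by_cases hne : ((K ×ˢ K) ∩ {q : M × M | η ≤ dist q.1 q.2}).Nonempty
  · have hcd : ContinuousOn (fun q : M × M => dist (f q.1) (f q.2))
        ((K ×ˢ K) ∩ {q : M × M | η ≤ dist q.1 q.2}) :=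
      continuous_dist.comp_continuousOn (ContinuousOn.prodMk
        (ContinuousOn.comp (t := K) hc continuousOn_fst (fun _ hq => hq.1.1))
        (ContinuousOn.comp (t := K) hc continuousOn_snd (fun _ hq => hq.1.2)))
    obtain ⟨q, hq, hm⟩ := hC.exists_isMinOn hne hcd
    have hpos : 0 < dist (f q.1) (f q.2) := by
      rw [dist_pos]
      intro h
      have := hi hq.1.1 hq.1.2 h
      have h2 := hq.2
      simp only [mem_ofPred_eq, this, dist_self] at h2
      linarith
    refine ⟨dist (f q.1) (f q.2) / 2, by linarith, fun x hx y hy h => ?_⟩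
    by_contra! h'
    have : dist (f q.1) (f q.2) ≤ dist (f x) (f y) := hm (show (x, y) ∈ _ from ⟨⟨hx, hy⟩, h'⟩)
    linarith
  · refine ⟨1, one_pos, fun x hx y hy _ => ?_⟩
    by_contra! h'
    exact hne ⟨(x, y), ⟨hx, hy⟩, h'⟩

theorem Sm_near {M : Type*} [PseudoMetricSpace M] {r : M → M} {ε η : ℝ} (hη : 0 < η)
    (hr : ∀ z, dist (r z) z < η) {l : List M} (hl : Sm ε l) : Sm (ε + 2 * η) (l.map r) := by
  apply Sm_map hl
  intro x _ y _ h
  have h1 := dist_triangle (r x) x (r y)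
  have h2 := dist_triangle x y (r y)
  have h3 := hr x
  have h4 := hr y
  rw [dist_comm] at h4
  linarith

theorem Sm_near' {M : Type*} [PseudoMetricSpace M] {r : M → M} {ε η : ℝ} (hη : 0 < η)
    (hr : ∀ z, dist (r z) z < η) {l l' : List M} (hl : Sm ε l)
    (h2 : ∀ z ∈ l', ∃ x ∈ l, z = id x ∨ z = r x) : Sm (ε + 2 * η) l' := by
  apply Sm_prism hl _ h2
  intro x y h
  have h1 := dist_triangle (r x) x (r y)
  have h2 := dist_triangle x y (r y)
  have h3 := hr x
  have h4 := hr y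
  rw [dist_comm] at h4
  simp only [id]
  refine ⟨?_, ?_, ?_⟩ <;> linarith

/-- invariance of dimension -/
theorem T1 {j i : ℕ} (f : (Fin j → ℝ) → (Fin i → ℝ)) {δ : ℝ} (hδ : 0 < δ)
    (hc : ContinuousOn f (Metric.closedBall 0 δ)) (hi : InjOn f (Metric.closedBall 0 δ)) :
    j ≤ i := by
  classical
  by_contra! hij
  have hK : IsCompact (Metric.closedBall (0 : Fin j → ℝ) δ) := isCompact_closedBall _ _
  obtain ⟨δ', hδ', hinv⟩ := inv_unif hK hc hi (show 0 < δ / 8 by linarith)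
  obtain ⟨μ, hμ, L, hL1, hL2⟩ := labels i hδ'
  obtain ⟨ε0, hε0, hf⟩ := Metric.uniformContinuousOn_iff.1 (hK.uniformContinuousOn_of_continuous hc) μ hμ
  let ρ : Fin (i + 1) × (Fin i → ℤ) → (Fin j → ℝ) := fun q =>
    if h : ∃ x ∈ Metric.closedBall (0 : Fin j → ℝ) δ, L (f x) = q then h.choose else 0
  let r : (Fin j → ℝ) → (Fin j → ℝ) := fun z =>
    if z ∈ Metric.closedBall (0 : Fin j → ℝ) δ then ρ (L (f z)) else z
  have hr : ∀ z, dist (r z) z < δ / 8 := by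
    intro z
    by_cases hz : z ∈ Metric.closedBall (0 : Fin j → ℝ) δ
    · have h : ∃ x ∈ Metric.closedBall (0 : Fin j → ℝ) δ, L (f x) = L (f z) := ⟨z, hz, rfl⟩
      simp only [r, if_pos hz, ρ, dif_pos h]
      exact hinv _ h.choose_spec.1 _ hz (hL1 _ _ h.choose_spec.2)
    · simp only [r, if_neg hz, dist_self]; linarith
  have hη : 0 < δ / 8 := by linarith
  let ε := min ε0 (δ / 8)
  have hε : 0 < ε := lt_min hε0 hη
  have hε8 : ε ≤ δ / 8 := min_le_right _ _
  apply thA 0 (pr id r (th 0)) δ ε hε (by simp)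
  · intro l hl hsm ⟨z, hz, hzδ⟩
    apply pr_eq_zero
    intro l' _ h2 h3
    by_contra hne
    have := th_supp (by linarith) (Sm_near' hη hr hsm h2) hne
    have hn : ‖z‖ ≤ dist (r z) z + ‖r z‖ := by
      have := dist_triangle z (r z) 0
      rw [dist_zero_right, dist_zero_right, dist_comm] at this; exact this
    have hrz := hr z
    rcases h3 z hz with h | h
    · have := this _ h
      simp only [id, dist_zero_right] at this
      linarith
    · have := this _ h
      rw [dist_zero_right] at this
      linarith
  · intro l hl hsm
    have hp := prism id r (th 0) l
    have e1 : pr id r (del (th 0)) l = 0 := pr_eq_zero fun l' _ _ _ => th_del _ _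
    have e2 : th 0 (l.map r) = 0 := by
      by_contra hne
      by_cases hin : ∀ z ∈ l, z ∈ Metric.closedBall (0 : Fin j → ℝ) δ
      · have hnd := th_nodup hne
        have hcol : (l.map fun z => (L (f z)).1).Nodup := by
          apply List.Nodup.map_on _ (List.Nodup.of_map _ hnd)
          intro x hx y hy hxy
          apply List.inj_on_of_nodup_map hnd hx hy
          have : dist (f x) (f y) < μ := hf x (hin x hx) y (hin y hy)
            ((hsm x hx y hy).trans_le (min_le_left _ _))
          simp only [r, if_pos (hin x hx), if_pos (hin y hy), hL2 _ _ this hxy]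
        have := hcol.length_le_card
        simp [hl] at this
        omega
      · push Not at hin
        obtain ⟨z, hz, hz'⟩ := hin
        have := th_supp (by linarith) (Sm_near hη hr hsm) hne (r z) (List.mem_map_of_mem hz)
        simp only [r, if_neg hz', dist_zero_right] at this
        rw [mem_closedBall_zero_iff, not_le] at hz'
        linarith
    rw [e1, e2, List.map_id] at hp
    simpa using hp

end AS

end Part4

section Part5

namespace AS

theorem Sm_sub {M : Type*} [PseudoMetricSpace M] {ε : ℝ} {l l' : List M} (hl : Sm ε l)
    (h : l'.Sublist l) : Sm ε l' := fun x hx y hy => hl x (h.subset hx) y (h.subset hy)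

/-- separation lemma -/
theorem sepS {n : ℕ} (hn : 1 ≤ n) {p q : Fin n → ℝ} {F A : Set (Fin n → ℝ)} {Ψ : Co (Fin n → ℝ)}
    {ρ1 ρ2 ε : ℝ} (hρ : ρ1 < ρ2) (hε : 0 < ε) (hs : Supp ρ1 ε n Ψ)
    (hd : ∀ l, l.length = n + 1 → Sm ε l → del Ψ l = th p l + th q l)
    (hF : IsClosed F) (h0 : ∀ l, l.length = n → Sm ε l → (∀ z ∈ l, z ∈ F) → Ψ l = 0)
    (hpF : p ∉ F) (hqF : q ∉ F) (hp : ‖p‖ < ρ1) (hq : ‖q‖ < ρ1)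
    (hA : IsOpen A) (hpA : p ∈ A) (hqA : q ∉ A)
    (hbd : ∀ w ∈ closure A, w ∉ A → ‖w‖ < ρ2 → w ∈ F) : False := by
  classical
  obtain ⟨s1, hs1, hps⟩ := Metric.isOpen_iff.1 hF.isOpen_compl p hpF
  obtain ⟨s2, hs2, hqs⟩ := Metric.isOpen_iff.1 hF.isOpen_compl q hqF
  obtain ⟨η, hη, hη1, hη2, hη3, hη4⟩ : ∃ η > 0, 4 * η ≤ s1 ∧ 4 * η ≤ s2 ∧ 3 * η ≤ ε ∧
      5 * η ≤ ρ2 - ρ1 := by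
    refine ⟨min (min s1 s2) (min ε (ρ2 - ρ1)) / 5, ?_, ?_, ?_, ?_, ?_⟩
    · have : 0 < min (min s1 s2) (min ε (ρ2 - ρ1)) :=
        lt_min (lt_min hs1 hs2) (lt_min hε (by linarith))
      linarith
    all_goals
      have h1 := min_le_left (min s1 s2) (min ε (ρ2 - ρ1))
      have h2 := min_le_right (min s1 s2) (min ε (ρ2 - ρ1))
      have h3 := min_le_left s1 s2
      have h4 := min_le_right s1 s2
      have h5 := min_le_left ε (ρ2 - ρ1)
      have h6 := min_le_right ε (ρ2 - ρ1)
      linarith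
  -- the push map
  let r : (Fin n → ℝ) → (Fin n → ℝ) := fun z => if h : ∃ y ∈ F, dist y z < η then h.choose else z
  have hr : ∀ z, dist (r z) z < η := by
    intro z
    by_cases h : ∃ y ∈ F, dist y z < η
    · simp only [r, dif_pos h]; exact h.choose_spec.2
    · simp only [r, dif_neg h, dist_self]; exact hη
  have hrF : ∀ z, (∃ y ∈ F, dist y z < η) → r z ∈ F := by
    intro z h
    simp only [r, dif_pos h]; exact h.choose_spec.1
  have pfar : ∀ y ∈ F, ∀ z, dist y z < η → 3 * η ≤ dist z p ∧ 3 * η ≤ dist z q := by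
    intro y hy z hz
    have a1 : s1 ≤ dist y p := by
      by_contra! h; exact hps (Metric.mem_ball.2 h) hy
    have a2 : s2 ≤ dist y q := by
      by_contra! h; exact hqs (Metric.mem_ball.2 h) hy
    have a3 := dist_triangle y z p
    have a4 := dist_triangle y z q
    constructor <;> linarith
  obtain ⟨ε', hε', hε'2⟩ : ∃ ε' > 0, 2 * ε' ≤ η := ⟨η / 2, by linarith, by linarith⟩
  -- auxiliary : near F or far out, th vanishes
  have thF : ∀ l, Sm (3 * η) l → (∃ z ∈ l, ∃ y ∈ F, dist y z < η) → th p l = 0 ∧ th q l = 0 := by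
    intro l hl ⟨z, hz, y, hy, hyz⟩
    have := pfar y hy z hyz
    constructor <;> by_contra h
    · have := th_supp (by linarith) hl h z hz; linarith
    · have := th_supp (by linarith) hl h z hz; linarith
  have thR : ∀ l, Sm (3 * η) l → (∃ z ∈ l, ρ1 + 3 * η ≤ ‖z‖) → th p l = 0 ∧ th q l = 0 := by
    intro l hl ⟨z, hz, hz'⟩
    have a1 := dist_triangle z p 0
    have a2 := dist_triangle z q 0
    simp only [dist_zero_right] at a1 a2
    constructor <;> by_contra h
    · have := th_supp (by linarith) hl h z hz; linarith
    · have := th_supp (by linarith) hl h z hz; linarith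
  let Ψ2 : Co (Fin n → ℝ) := Ψ + del (pr id r Ψ)
  have hΨ2 : ∀ l, Ψ2 l = Ψ (l.map r) + pr id r (del Ψ) l := by
    intro l
    have := prism id r Ψ l
    rw [List.map_id] at this
    simp only [Ψ2, Pi.add_apply]
    have e : del (pr id r Ψ) l = Ψ l + Ψ (l.map r) + pr id r (del Ψ) l := by
      rw [← this, add_assoc, z2, add_zero]
    rw [e, ← add_assoc, ← add_assoc, z2, zero_add]
  have hdΨ2 : ∀ l, l.length = n + 1 → Sm ε' l → del Ψ2 l = th p l + th q l := by
    intro l hl hsm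
    rw [del_add, del_del, add_zero]
    exact hd l hl (hsm.mono (by linarith))
  have hprF : ∀ l, l.length = n → Sm ε' l → (∀ z ∈ l, ∃ y ∈ F, dist y z < η) → Ψ2 l = 0 := by
    intro l hl hsm hz
    rw [hΨ2]
    have e1 : Ψ (l.map r) = 0 := by
      apply h0 _ (by simp [hl]) ((Sm_near hη hr hsm).mono (by linarith))
      intro z hz'
      obtain ⟨w, hw, rfl⟩ := List.mem_map.1 hz'
      exact hrF w (hz w hw)
    have e2 : pr id r (del Ψ) l = 0 := by
      apply pr_eq_zero
      intro l' h1 h2 h3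
      have hsm' : Sm (3 * η) l' := (Sm_near' hη hr hsm h2).mono (by linarith)
      rw [hd l' (by omega) (hsm'.mono hη3)]
      match l', h1, h2 with
      | z :: l'', _, h2 =>
        have : ∃ y ∈ F, dist y z < η := by
          obtain ⟨x, hx, h | h⟩ := h2 z (by simp)
          · rw [h]; exact hz x hx
          · exact ⟨z, h ▸ hrF x (hz x hx), by simpa using hη⟩
        obtain ⟨a, b⟩ := thF _ hsm' ⟨z, by simp, this⟩
        rw [a, b, add_zero]
    rw [e1, e2, add_zero]
  have hsup2 : Supp (ρ1 + 4 * η) ε' n Ψ2 := by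
    intro l hl hsm ⟨z, hz, hz'⟩
    rw [hΨ2]
    have hn' : ‖z‖ ≤ dist (r z) z + ‖r z‖ := by
      have := dist_triangle z (r z) 0
      rw [dist_zero_right, dist_zero_right, dist_comm] at this; exact this
    have hrz := hr z
    have e1 : Ψ (l.map r) = 0 := by
      apply hs _ (by simp [hl]) ((Sm_near hη hr hsm).mono (by linarith))
      exact ⟨r z, List.mem_map_of_mem hz, by linarith⟩
    have e2 : pr id r (del Ψ) l = 0 := by
      apply pr_eq_zero
      intro l' h1 h2 h3
      have hsm' : Sm (3 * η) l' := (Sm_near' hη hr hsm h2).mono (by linarith)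
      rw [hd l' (by omega) (hsm'.mono hη3)]
      have : ∃ z ∈ l', ρ1 + 3 * η ≤ ‖z‖ := by
        rcases h3 z hz with h | h
        · exact ⟨z, h, by linarith⟩
        · exact ⟨r z, h, by linarith⟩
      obtain ⟨a, b⟩ := thR _ hsm' this
      rw [a, b, add_zero]
    rw [e1, e2, add_zero]
  -- segments
  have seg : ∀ a ∈ A, ∀ b ∉ A, ∃ w, dist w a ≤ dist a b ∧ (w ∈ F ∨ ρ2 ≤ ‖w‖) := by
    intro a ha b hb
    have hc : IsPreconnected (segment ℝ a b) := (convex_segment a b).isPreconnected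
    obtain ⟨w, hw, hwf⟩ : ∃ w ∈ segment ℝ a b, w ∈ closure A ∧ w ∉ A := by
      by_contra! hno
      obtain ⟨v, _, hv1, hv2⟩ := hc A (closure A)ᶜ hA isClosed_closure.isOpen_compl
        (fun v hv => by
          by_cases h : v ∈ closure A
          · exact Or.inl (hno v hv h)
          · exact Or.inr h) ⟨a, left_mem_segment ℝ a b, ha⟩
        ⟨b, right_mem_segment ℝ a b, fun h => hb (hno b (right_mem_segment ℝ a b) h)⟩
      exact hv2 (subset_closure hv1)
    refine ⟨w, ?_, ?_⟩
    · have := (convex_closedBall a (dist a b)).segment_subset (Metric.mem_closedBall_self dist_nonneg)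
        (show b ∈ Metric.closedBall a (dist a b) by rw [Metric.mem_closedBall, dist_comm]) hw
      exact this
    · by_cases h : ‖w‖ < ρ2
      · exact Or.inl (hbd w hwf.1 hwf.2 h)
      · exact Or.inr (not_lt.1 h)
  have nearp : ∀ z, dist z p < ε' → z ∈ A := by
    intro z hz
    by_contra hzA
    obtain ⟨w, hw, h⟩ := seg p hpA z hzA
    rw [dist_comm p z] at hw
    rcases h with h | h
    · have := (pfar w h w (by simpa using hη)).1
      linarith
    · have := dist_triangle w p 0
      simp only [dist_zero_right] at this
      linarith
  have nearq : ∀ z, dist z q < ε' → z ∉ A := by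
    intro z hz hzA
    obtain ⟨w, hw, h⟩ := seg z hzA q hqA
    have h2 := dist_triangle w z q
    rcases h with h | h
    · have := (pfar w h w (by simpa using hη)).2
      linarith
    · have := dist_triangle w q 0
      simp only [dist_zero_right] at this
      linarith
  let Ξ : Co (Fin n → ℝ) := fun l => match l with
    | [] => 0
    | x :: t => if x ∈ A then Ψ2 (x :: t) else 0
  have Ξ1 : ∀ l, (∀ z ∈ l, z ∈ A) → l ≠ [] → Ξ l = Ψ2 l := by
    intro l h hne
    match l, hne with
    | x :: t, _ => simp only [Ξ, if_pos (h x (by simp))]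
  have Ξ2 : ∀ l, (∀ z ∈ l, z ∉ A) → Ξ l = 0 := by
    intro l h
    match l with
    | [] => rfl
    | x :: t => simp only [Ξ, if_neg (h x (by simp))]
  have Ξ3 : ∀ l, Ψ2 l = 0 → Ξ l = 0 := by
    intro l h
    match l with
    | [] => rfl
    | x :: t => simp only [Ξ, h, ite_self]
  refine thA p Ξ (ρ1 + 4 * η) ε' hε' rfl ?_ ?_
  · intro l hl hsm hz
    exact Ξ3 l (hsup2 l hl hsm hz)
  · intro l hl hsm
    by_cases h1 : ∀ z ∈ l, z ∈ A
    · have e : del Ξ l = del Ψ2 l := by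
        apply del_congr
        intro l' hsub hlen
        apply Ξ1 l' (fun z hz => h1 z (hsub.subset hz))
        rintro rfl
        simp at hlen; omega
      have e2 : th q l = 0 := by
        by_contra h
        match l, hl with
        | z :: t, _ =>
          exact nearq z (th_supp hε' hsm h z (by simp)) (h1 z (by simp))
      rw [e, hdΨ2 l hl hsm, e2, add_zero]
    by_cases h2 : ∀ z ∈ l, z ∉ A
    · have e : del Ξ l = 0 := by
        apply del_eq_zero
        intro l' hsub hlen
        exact Ξ2 l' (fun z hz => h2 z (hsub.subset hz))
      have e2 : th p l = 0 := by
        by_contra h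
        match l, hl with
        | z :: t, _ =>
          exact h2 z (by simp) (nearp z (th_supp hε' hsm h z (by simp)))
      rw [e, e2]
    push Not at h1 h2
    obtain ⟨b, hbl, hbA⟩ := h1
    obtain ⟨a, hal, haA⟩ := h2
    obtain ⟨w, hw, h⟩ := seg a haA b hbA
    have hwz : ∀ z ∈ l, dist w z < 2 * ε' := by
      intro z hz
      have := dist_triangle w a z
      have h3 := hsm a hal z hz
      have h4 := hsm a hal b hbl
      linarith
    have hsm3 : Sm (3 * η) l := hsm.mono (by linarith)
    rcases h with h | h
    · have e : del Ξ l = 0 := by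
        apply del_eq_zero
        intro l' hsub hlen
        apply Ξ3
        apply hprF l' (by omega) (Sm_sub hsm hsub)
        intro z hz
        exact ⟨w, h, (hwz z (hsub.subset hz)).trans_le hε'2⟩
      rw [e, (thF l hsm3 ⟨a, hal, w, h, (hwz a hal).trans_le hε'2⟩).1]
    · have hbig : ∀ z ∈ l, ρ1 + 4 * η ≤ ‖z‖ := by
        intro z hz
        have := dist_triangle w z 0
        simp only [dist_zero_right] at this
        have := hwz z hz
        linarith
      have e : del Ξ l = 0 := by
        apply del_eq_zero
        intro l' hsub hlen
        match l', hsub, hlen with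
        | [], _, _ => rfl
        | z :: t, hsub, hlen =>
          refine Ξ3 (z :: t) ?_
          exact hsup2 _ (by omega) (Sm_sub hsm hsub) ⟨z, by simp, hbig z (hsub.subset (by simp))⟩
      have := hbig a hal
      rw [e, (thR l hsm3 ⟨a, hal, by linarith⟩).1]

/-- connecting cochain between two points -/
theorem join {n : ℕ} (p q : Fin n → ℝ) {r r' : ℝ} (hr : r < r') (hp : ‖p‖ < r) (hq : ‖q‖ < r) :
    ∃ ε > 0, ∃ Ψ : Co (Fin n → ℝ), Ψ [] = 0 ∧ Supp r' ε n Ψ ∧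
      ∀ l, l.length = n + 1 → Sm ε l → del Ψ l = th p l + th q l := by
  have hr0 : 0 < r := (norm_nonneg p).trans_lt hp
  have hsupp : ∀ p : Fin n → ℝ, ‖p‖ < r → Supp ((r + r') / 2) ((r' - r) / 2) (n + 1) (th p) := by
    intro p hp l hl hsm ⟨z, hz, hz'⟩
    by_contra h
    have h1 := th_supp (by linarith) hsm h z hz
    have h2 := dist_triangle z p 0
    simp only [dist_zero_right] at h2
    linarith
  obtain ⟨c, d, hcd, ε, hε, Ψ, Ψ0, Ψs, hΨ⟩ := thB (th p) (th q) (R := (r + r') / 2) (R' := r')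
    (ε := (r' - r) / 2) (by linarith) (by linarith) (by linarith)
    (fun l _ _ => th_del _ _) (fun l _ _ => th_del _ _) (hsupp p hp) (hsupp q hq)
  have key : ∀ c d : ZMod 2, (c ≠ 0 ∨ d ≠ 0) → (c = 1 ∧ d = 1) ∨ (c = 1 ∧ d = 0) ∨ (c = 0 ∧ d = 1) := by
    decide
  rcases key c d hcd with ⟨rfl, rfl⟩ | ⟨rfl, rfl⟩ | ⟨rfl, rfl⟩
  · exact ⟨ε, hε, Ψ, Ψ0, Ψs, by simpa using hΨ⟩
  · exact (thA p Ψ r' ε hε Ψ0 Ψs (by simpa using hΨ)).elim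
  · exact (thA q Ψ r' ε hε Ψ0 Ψs (by simpa using hΨ)).elim

end AS

end Part5

section Part6

namespace AS

/-- local data around a point of an embedded hypersurface -/
structure Loc {k : ℕ} (g : (Fin k → ℝ) → (Fin (k + 1) → ℝ)) (δ δ1 δ2 r r' R1 R0 : ℝ) : Prop where
  d1 : 0 < δ1
  d12 : δ1 < δ2
  d2 : δ2 ≤ δ
  hc : ContinuousOn g (Metric.closedBall 0 δ)
  hi : InjOn g (Metric.closedBall 0 δ)
  hg : ∀ z, δ1 ≤ ‖z‖ → ‖z‖ ≤ δ → r' ≤ ‖g z‖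
  hg2 : ∀ z, ‖z‖ ≤ δ2 → ‖g z‖ ≤ R1
  r0 : 0 < r
  rr : r < r'
  r1 : r' ≤ R1
  R1R : R1 < R0

open Classical in
def pbk {k n : ℕ} (g : (Fin k → ℝ) → (Fin n → ℝ)) (δ : ℝ) (Ψ : Co (Fin n → ℝ)) : Co (Fin k → ℝ) :=
  fun l => if ∀ z ∈ l, ‖z‖ ≤ δ then Ψ (l.map g) else 0

variable {k : ℕ} {g : (Fin k → ℝ) → (Fin (k + 1) → ℝ)} {δ δ1 δ2 r r' R1 R0 : ℝ}

theorem Loc.isCompact (h : Loc g δ δ1 δ2 r r' R1 R0) : IsCompact (g '' Metric.closedBall 0 δ) :=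
  (isCompact_closedBall _ _).image_of_continuousOn h.hc

theorem pbk_coc (h : Loc g δ δ1 δ2 r r' R1 R0) {Ψ : Co (Fin (k + 1) → ℝ)} {ε : ℝ} (hε : 0 < ε)
    (hs : Supp r' ε (k + 1) Ψ) {p q : Fin (k + 1) → ℝ}
    (hd : ∀ l, l.length = k + 2 → Sm ε l → del Ψ l = th p l + th q l)
    (hp : p ∉ g '' Metric.closedBall 0 δ) (hq : q ∉ g '' Metric.closedBall 0 δ) :
    ∃ ε' > 0, (∀ l, l.length = k + 2 → Sm ε' l → del (pbk g δ Ψ) l = 0) ∧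
      Supp δ1 ε' (k + 1) (pbk g δ Ψ) := by
  have hcl := h.isCompact.isClosed
  obtain ⟨s1, hs1, hps⟩ := Metric.isOpen_iff.1 hcl.isOpen_compl p hp
  obtain ⟨s2, hs2, hqs⟩ := Metric.isOpen_iff.1 hcl.isOpen_compl q hq
  let ε2 := min ε (min s1 s2)
  have hε2 : 0 < ε2 := lt_min hε (lt_min hs1 hs2)
  have hε2a : ε2 ≤ ε := min_le_left _ _
  have hε2b : ε2 ≤ s1 := (min_le_right _ _).trans (min_le_left _ _)
  have hε2c : ε2 ≤ s2 := (min_le_right _ _).trans (min_le_right _ _)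
  obtain ⟨ε1, hε1, hu⟩ := Metric.uniformContinuousOn_iff.1
    ((isCompact_closedBall _ _).uniformContinuousOn_of_continuous h.hc) ε2 hε2
  have d1 := h.d12
  have d2 := h.d2
  have smg : ∀ l : List (Fin k → ℝ), Sm (min ε1 (δ - δ1)) l → (∀ z ∈ l, ‖z‖ ≤ δ) →
      Sm ε2 (l.map g) := by
    intro l hl hz
    apply Sm_map hl
    intro x hx y hy hxy
    exact hu x (by simpa using hz x hx) y (by simpa using hz y hy) (hxy.trans_le (min_le_left _ _))
  have hsup : Supp δ1 (min ε1 (δ - δ1)) (k + 1) (pbk g δ Ψ) := by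
    intro l hl hsm ⟨z, hz, hz'⟩
    rw [pbk]
    split_ifs with hall
    · exact hs _ (by simp [hl]) ((smg l hsm hall).mono hε2a)
        ⟨g z, List.mem_map_of_mem hz, h.hg z hz' (hall z hz)⟩
    · rfl
  refine ⟨min ε1 (δ - δ1), lt_min hε1 (by linarith), ?_, hsup⟩
  intro l hl hsm
  by_cases hall : ∀ z ∈ l, ‖z‖ ≤ δ
  · have e : del (pbk g δ Ψ) l = del (pb g Ψ) l := by
      apply del_congr
      intro l' hsub _
      rw [pbk, if_pos (fun z hz => hall z (hsub.subset hz)), pb]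
    have hsm2 := smg l hsm hall
    rw [e, del_pb, hd _ (by simp [hl]) (hsm2.mono hε2a)]
    match l, hl with
    | z :: t, _ =>
      have hz : g z ∈ g '' Metric.closedBall 0 δ := ⟨z, by simpa using hall z (by simp), rfl⟩
      have e1 : th p ((z :: t).map g) = 0 := by
        by_contra hne
        have := th_supp hε2 hsm2 hne (g z) (by simp)
        exact hps (Metric.mem_ball.2 (this.trans_le hε2b)) hz
      have e2 : th q ((z :: t).map g) = 0 := by
        by_contra hne
        have := th_supp hε2 hsm2 hne (g z) (by simp)
        exact hqs (Metric.mem_ball.2 (this.trans_le hε2c)) hz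
      rw [e1, e2, add_zero]
  · push Not at hall
    obtain ⟨z, hz, hz'⟩ := hall
    apply del_eq_zero
    intro l' hsub hlen
    apply hsup l' (by omega) (Sm_sub hsm hsub)
    match l', hsub, hlen with
    | [], _, hlen => simp at hlen; omega
    | w :: t, hsub, hlen =>
      refine ⟨w, by simp, ?_⟩
      have h1 := (hsm z hz w (hsub.subset (by simp))).trans_le (min_le_right _ _)
      have h2 := dist_triangle z w 0
      simp only [dist_zero_right] at h2
      linarith

theorem core (h : Loc g δ δ1 δ2 r r' R1 R0) {Ψ : Co (Fin (k + 1) → ℝ)} {χ : Co (Fin k → ℝ)} {ε : ℝ}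
    (hε : 0 < ε) (hs : Supp r' ε (k + 1) Ψ) {p q : Fin (k + 1) → ℝ}
    (hd : ∀ l, l.length = k + 2 → Sm ε l → del Ψ l = th p l + th q l)
    (hχ0 : χ [] = 0) (hχs : Supp δ2 ε k χ) {F A : Set (Fin (k + 1) → ℝ)} (hF : IsClosed F)
    (hFD : F ⊆ g '' Metric.closedBall 0 δ)
    (hχ : ∀ l, l.length = k + 1 → Sm ε l → (∀ z ∈ l, ‖z‖ ≤ δ ∧ g z ∈ F) →
      del χ l = Ψ (l.map g))
    (hpF : p ∉ F) (hqF : q ∉ F) (hp : ‖p‖ < r) (hq : ‖q‖ < r)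
    (hA : IsOpen A) (hpA : p ∈ A) (hqA : q ∉ A)
    (hbd : ∀ w ∈ closure A, w ∉ A → ‖w‖ < R0 → w ∈ F) : False := by
  classical
  have r0 := h.r0
  have rr := h.rr
  have r1 := h.r1
  have R1R := h.R1R
  obtain ⟨ε2, hε2, hinv⟩ := inv_unif (isCompact_closedBall _ _) h.hc h.hi hε
  let D := g '' Metric.closedBall 0 δ
  let gi : (Fin (k + 1) → ℝ) → (Fin k → ℝ) := Function.invFunOn g (Metric.closedBall 0 δ)
  have gi1 : ∀ w ∈ D, gi w ∈ Metric.closedBall 0 δ := fun w hw => Function.invFunOn_mem hw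
  have gi2 : ∀ w ∈ D, g (gi w) = w := fun w hw => Function.invFunOn_eq hw
  let χt : Co (Fin (k + 1) → ℝ) := fun l => if ∀ z ∈ l, z ∈ D then χ (l.map gi) else 0
  let ε3 := min ε (min ε2 ((R0 - R1) / 2))
  have hε3 : 0 < ε3 := lt_min hε (lt_min hε2 (by linarith))
  have e3a : ε3 ≤ ε := min_le_left _ _
  have e3b : ε3 ≤ ε2 := (min_le_right _ _).trans (min_le_left _ _)
  have e3c : ε3 ≤ (R0 - R1) / 2 := (min_le_right _ _).trans (min_le_right _ _)
  have smi : ∀ l, Sm ε3 l → (∀ z ∈ l, z ∈ D) → Sm ε (l.map gi) := by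
    intro l hl hz
    apply Sm_map hl
    intro x hx y hy hxy
    apply hinv _ (gi1 x (hz x hx)) _ (gi1 y (hz y hy))
    rw [gi2 x (hz x hx), gi2 y (hz y hy)]
    linarith
  refine sepS (n := k + 1) (by omega) (p := p) (q := q) (F := F) (A := A) (Ψ := Ψ + del χt)
    (ρ1 := (R1 + R0) / 2) (ρ2 := R0) (ε := ε3) (by linarith) hε3 ?_ ?_ hF ?_ hpF hqF
    (by linarith) (by linarith) hA hpA hqA hbd
  · intro l hl hsm ⟨z, hz, hz'⟩
    have e1 : Ψ l = 0 := hs l hl (hsm.mono e3a) ⟨z, hz, by linarith⟩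
    have e2 : del χt l = 0 := by
      apply del_eq_zero
      intro l' hsub hlen
      match l', hsub, hlen with
      | [], _, _ => simpa [χt] using hχ0
      | w :: t, hsub, hlen =>
        have hsm' : Sm ε3 (w :: t) := Sm_sub hsm hsub
        simp only [χt]
        split_ifs with hall
        · apply hχs _ (by simp at hlen ⊢; omega) (smi _ hsm' hall)
          refine ⟨gi w, by simp, ?_⟩
          by_contra! hlt
          have a1 := h.hg2 (gi w) hlt.le
          rw [gi2 w (hall w (by simp))] at a1
          have a2 := hsm z hz w (hsub.subset (by simp))
          have a3 := dist_triangle z w 0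
          simp only [dist_zero_right] at a3
          -- strictness
          linarith
        · rfl
    rw [Pi.add_apply, e1, e2, add_zero]
  · intro l hl hsm
    rw [del_add, del_del, add_zero]
    exact hd l hl (hsm.mono e3a)
  · intro l hl hsm hz
    have hzD : ∀ z ∈ l, z ∈ D := fun z hz' => hFD (hz z hz')
    have e : del χt l = del (pb gi χ) l := by
      apply del_congr
      intro l' hsub _
      simp only [χt, if_pos (fun z hz => hzD z (hsub.subset hz)), pb]
    have e2 : (l.map gi).map g = l := by
      rw [List.map_map]
      conv_rhs => rw [← List.map_id l]
      apply List.map_congr_left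
      intro w hw
      exact gi2 w (hzD w hw)
    rw [Pi.add_apply, e, del_pb, hχ (l.map gi) (by simp [hl]) (smi l hsm hzD), e2, z2]
    intro z hz'
    obtain ⟨w, hw, rfl⟩ := List.mem_map.1 hz'
    refine ⟨by simpa using gi1 w (hzD w hw), ?_⟩
    rw [gi2 w (hzD w hw)]; exact hz w hw

end AS

end Part6

section Part7

namespace AS

theorem exists_Loc {k : ℕ} {g : (Fin k → ℝ) → (Fin (k + 1) → ℝ)} {δ : ℝ} (hδ : 0 < δ)
    (hc : ContinuousOn g (Metric.closedBall 0 δ)) (hi : InjOn g (Metric.closedBall 0 δ))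
    (h0 : g 0 = 0) {R0 : ℝ} (hR : 0 < R0) :
    ∃ δ1 δ2 r r' R1, Loc g δ δ1 δ2 r r' R1 R0 := by
  have hm : (0 : Fin k → ℝ) ∈ Metric.closedBall 0 δ := by simpa using hδ.le
  obtain ⟨δ', hδ', h1⟩ := Metric.continuousOn_iff.1 hc 0 hm (R0 / 2) (by linarith)
  have hd2 : 0 < min δ (δ' / 2) := lt_min hδ (by linarith)
  have hd2' : min δ (δ' / 2) ≤ δ' / 2 := min_le_right _ _
  have hd2'' : min δ (δ' / 2) ≤ δ := min_le_left _ _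
  set δ2 := min δ (δ' / 2)
  obtain ⟨r2, hr2, hinv⟩ := inv_unif (isCompact_closedBall _ _) hc hi (show 0 < δ2 / 2 by linarith)
  have hr' : 0 < min r2 (R0 / 2) := lt_min hr2 (by linarith)
  refine ⟨δ2 / 2, δ2, min r2 (R0 / 2) / 2, min r2 (R0 / 2), R0 / 2, by linarith, by linarith, hd2'',
    hc, hi, ?_, ?_, by linarith, by linarith, min_le_right _ _, by linarith⟩
  · intro z hz1 hz2
    by_contra! h
    have := hinv z (by simpa using hz2) 0 hm (by
      rw [h0, dist_zero_right]; exact h.le.trans (min_le_left _ _))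
    rw [dist_zero_right] at this
    linarith
  · intro z hz
    have := h1 z (by rw [mem_closedBall_zero_iff]; linarith) (by rw [dist_zero_right]; linarith)
    rw [h0, dist_zero_right] at this
    exact this.le

theorem comp_bd {n : ℕ} {D : Set (Fin n → ℝ)} (hD : IsClosed D) {R0 : ℝ} (p : Fin n → ℝ) :
    ∀ w ∈ closure (connectedComponentIn (Metric.ball 0 R0 \ D) p),
      w ∉ connectedComponentIn (Metric.ball 0 R0 \ D) p → ‖w‖ < R0 → w ∈ D := by
  intro w hw hwA hwR
  by_contra hwD
  have hU : IsOpen (Metric.ball (0 : Fin n → ℝ) R0 \ D) := Metric.isOpen_ball.sdiff hD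
  have hwU : w ∈ Metric.ball (0 : Fin n → ℝ) R0 \ D := ⟨by simpa using hwR, hwD⟩
  have ho : IsOpen (connectedComponentIn (Metric.ball 0 R0 \ D) w) := hU.connectedComponentIn
  obtain ⟨v, hv1, hv2⟩ := mem_closure_iff.1 hw _ ho (mem_connectedComponentIn hwU)
  apply hwA
  rw [connectedComponentIn_eq hv2, ← connectedComponentIn_eq hv1]
  exact mem_connectedComponentIn hwU

theorem mulcases : ∀ c d : ZMod 2, (c ≠ 0 ∨ d ≠ 0) →
    (c = 1 ∧ d = 1) ∨ (c = 1 ∧ d = 0) ∨ (c = 0 ∧ d = 1) := by decide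

theorem T2i {k : ℕ} {g : (Fin k → ℝ) → (Fin (k + 1) → ℝ)} {δ δ1 δ2 r r' R1 R0 : ℝ}
    (h : Loc g δ δ1 δ2 r r' R1 R0) {p1 p2 p3 : Fin (k + 1) → ℝ}
    (h1 : ‖p1‖ < r) (h2 : ‖p2‖ < r) (h3 : ‖p3‖ < r)
    (hp1 : p1 ∉ g '' Metric.closedBall 0 δ) (hp2 : p2 ∉ g '' Metric.closedBall 0 δ)
    (hp3 : p3 ∉ g '' Metric.closedBall 0 δ) :
    ∃ C, IsPreconnected C ∧ C ⊆ Metric.ball 0 R0 \ g '' Metric.closedBall 0 δ ∧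
      ((p1 ∈ C ∧ p2 ∈ C) ∨ (p1 ∈ C ∧ p3 ∈ C) ∨ (p2 ∈ C ∧ p3 ∈ C)) := by
  set D := g '' Metric.closedBall 0 δ with hDdef
  have hD : IsClosed D := h.isCompact.isClosed
  have hU : IsOpen (Metric.ball (0 : Fin (k + 1) → ℝ) R0 \ D) := Metric.isOpen_ball.sdiff hD
  have hrR : r < R0 := by linarith [h.rr, h.r1, h.R1R]
  have mem : ∀ p, ‖p‖ < r → p ∉ D → p ∈ connectedComponentIn (Metric.ball 0 R0 \ D) p := by
    intro p hp hpD
    exact mem_connectedComponentIn ⟨by simpa using hp.trans hrR, hpD⟩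
  by_contra hno
  have no : ∀ p q, ‖p‖ < r → p ∉ D → ((p = p1 ∧ q = p2) ∨ (p = p1 ∧ q = p3) ∨ (p = p2 ∧ q = p3)) →
      q ∉ connectedComponentIn (Metric.ball 0 R0 \ D) p := by
    intro p q hp hpD hpq hq
    apply hno
    refine ⟨connectedComponentIn (Metric.ball 0 R0 \ D) p, isPreconnected_connectedComponentIn,
      connectedComponentIn_subset _ _, ?_⟩
    have := mem p hp hpD
    rcases hpq with ⟨rfl, rfl⟩ | ⟨rfl, rfl⟩ | ⟨rfl, rfl⟩ <;> tauto
  obtain ⟨ε1, hε1, Ψ1, -, hs1, hd1⟩ := join p1 p2 h.rr h1 h2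
  obtain ⟨ε2, hε2, Ψ2, -, hs2, hd2⟩ := join p1 p3 h.rr h1 h3
  obtain ⟨ε3, hε3, hc1, hS1⟩ := pbk_coc h hε1 hs1 hd1 hp1 hp2
  obtain ⟨ε4, hε4, hc2, hS2⟩ := pbk_coc h hε2 hs2 hd2 hp1 hp3
  obtain ⟨c, d, hcd, ε5, hε5, χ, χ0, χs, hχ⟩ := thB (pbk g δ Ψ1) (pbk g δ Ψ2) h.d1 h.d12
    (lt_min hε3 hε4) (fun l hl hsm => hc1 l hl (hsm.mono (min_le_left _ _)))
    (fun l hl hsm => hc2 l hl (hsm.mono (min_le_right _ _))) (hS1.mono le_rfl (min_le_left _ _))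
    (hS2.mono le_rfl (min_le_right _ _))
  let ε := min ε5 (min ε1 ε2)
  have hε : 0 < ε := lt_min hε5 (lt_min hε1 hε2)
  have ea : ε ≤ ε5 := min_le_left _ _
  have eb : ε ≤ ε1 := (min_le_right _ _).trans (min_le_left _ _)
  have ec : ε ≤ ε2 := (min_le_right _ _).trans (min_le_right _ _)
  have hχ' : ∀ l, l.length = k + 1 → Sm ε l → (∀ z ∈ l, ‖z‖ ≤ δ ∧ g z ∈ D) →
      del χ l = c * Ψ1 (l.map g) + d * Ψ2 (l.map g) := by
    intro l hl hsm hz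
    rw [hχ l hl (hsm.mono ea)]
    simp only [pbk, if_pos (fun z hz' => (hz z hz').1)]
  have fin : ∀ p q, ‖p‖ < r → p ∉ D → ‖q‖ < r → q ∉ D →
      ((p = p1 ∧ q = p2) ∨ (p = p1 ∧ q = p3) ∨ (p = p2 ∧ q = p3)) →
      (∀ l, c * (th p1 l + th p2 l) + d * (th p1 l + th p3 l) = th p l + th q l) → False := by
    intro p q hp hpD hq hqD hpq hth
    refine core h (Ψ := fun l => c * Ψ1 l + d * Ψ2 l) (χ := χ) (ε := ε) (p := p) (q := q) (F := D)
      (A := connectedComponentIn (Metric.ball 0 R0 \ D) p) hε ?_ ?_ χ0 (χs.mono le_rfl ea) hD le_rfl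
      hχ' hpD hqD hp hq hU.connectedComponentIn (mem p hp hpD) (no p q hp hpD hpq)
      (comp_bd hD p)
    · intro l hl hsm hz
      simp only [hs1 l hl (hsm.mono eb) hz, hs2 l hl (hsm.mono ec) hz, mul_zero, add_zero]
    · intro l hl hsm
      rw [del_lin, hd1 l hl (hsm.mono eb), hd2 l hl (hsm.mono ec), hth]
  rcases mulcases c d hcd with ⟨rfl, rfl⟩ | ⟨rfl, rfl⟩ | ⟨rfl, rfl⟩
  · refine fin p2 p3 h2 hp2 h3 hp3 (by simp) (fun l => ?_)
    generalize th p1 l = a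
    generalize th p2 l = b
    generalize th p3 l = e
    revert a b e; decide
  · exact fin p1 p2 h1 hp1 h2 hp2 (by simp) (fun l => by ring)
  · exact fin p1 p3 h1 hp1 h3 hp3 (by simp) (fun l => by ring)

theorem T2ii {k : ℕ} {g : (Fin k → ℝ) → (Fin (k + 1) → ℝ)} {δ δ1 δ2 r r' R1 R0 : ℝ}
    (h : Loc g δ δ1 δ2 r r' R1 R0) {p y : Fin (k + 1) → ℝ}
    (hpr : ‖p‖ < r) (hyr : ‖y‖ < r)
    (hp : p ∉ g '' Metric.closedBall 0 δ) (hy : y ∈ g '' Metric.closedBall 0 δ) :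
    ∃ C, IsPreconnected C ∧ C ⊆ Metric.ball 0 R0 \ g '' Metric.closedBall 0 δ ∧
      p ∈ C ∧ y ∈ closure C := by
  set D := g '' Metric.closedBall 0 δ with hDdef
  have hD : IsClosed D := h.isCompact.isClosed
  have hU : IsOpen (Metric.ball (0 : Fin (k + 1) → ℝ) R0 \ D) := Metric.isOpen_ball.sdiff hD
  have hrR : r < R0 := by linarith [h.rr, h.r1, h.R1R]
  have hpA : p ∈ connectedComponentIn (Metric.ball 0 R0 \ D) p :=
    mem_connectedComponentIn ⟨by simpa using hpr.trans hrR, hp⟩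
  refine ⟨connectedComponentIn (Metric.ball 0 R0 \ D) p, isPreconnected_connectedComponentIn,
      connectedComponentIn_subset _ _, hpA, ?_⟩
  set A := connectedComponentIn (Metric.ball 0 R0 \ D) p with hAdef
  have hAo : IsOpen A := hU.connectedComponentIn
  by_contra hyA
  obtain ⟨s0, hs0, hsA⟩ := Metric.isOpen_iff.1 isClosed_closure.isOpen_compl y hyA
  let s := min s0 (r - ‖y‖)
  have hs : 0 < s := lt_min hs0 (by linarith)
  have hsA' : ∀ z, dist z y < s → z ∉ A := fun z hz hzA =>
    hsA (Metric.mem_ball.2 (hz.trans_le (min_le_left _ _))) (subset_closure hzA)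
  have hsr : ∀ z, dist z y < s → ‖z‖ < r := by
    intro z hz
    have h1 := hz.trans_le (min_le_right _ _)
    have h2 := dist_triangle z y 0
    simp only [dist_zero_right] at h2
    linarith
  -- a point q near y off D
  obtain ⟨e, heB, rfl⟩ := hy
  obtain ⟨q, hqs, hqD⟩ : ∃ q, dist q (g e) < s ∧ q ∉ D := by
    by_contra! hall
    have hmem : ∀ z ∈ Metric.closedBall (0 : Fin (k + 1) → ℝ) (s / 2), z + g e ∈ D := by
      intro z hz
      apply hall
      rw [mem_closedBall_zero_iff] at hz
      rw [dist_eq_norm, add_sub_cancel_right]; linarith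
    have hbij : ∀ w ∈ D, Function.invFunOn g (Metric.closedBall 0 δ) w ∈ Metric.closedBall 0 δ ∧
        g (Function.invFunOn g (Metric.closedBall 0 δ) w) = w :=
      fun w hw => ⟨Function.invFunOn_mem hw, Function.invFunOn_eq hw⟩
    have := T1 (j := k + 1) (i := k)
      (fun z => Function.invFunOn g (Metric.closedBall 0 δ) (z + g e)) (δ := s / 2) (by linarith)
      (by
        rw [Metric.continuousOn_iff]
        intro b hb η hη
        obtain ⟨η', hη', hinv⟩ := inv_unif (isCompact_closedBall _ _) h.hc h.hi hη
        refine ⟨η', hη', fun a ha hab => ?_⟩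
        apply hinv _ (hbij _ (hmem a ha)).1 _ (hbij _ (hmem b hb)).1
        rw [(hbij _ (hmem a ha)).2, (hbij _ (hmem b hb)).2, dist_add_right]
        exact hab.le)
      (by
        intro a ha b hb hab
        have h1 := (hbij _ (hmem a ha)).2
        have h2 := (hbij _ (hmem b hb)).2
        simp only at hab
        rw [hab, h2] at h1
        exact (add_right_cancel h1).symm)
    omega
  have hqr : ‖q‖ < r := hsr q hqs
  have hed : ‖e‖ < δ1 := by
    by_contra! hle
    have := h.hg e hle (by simpa using heB)
    linarith [h.rr]
  obtain ⟨ε1, hε1, Ψ1, -, hs1, hd1⟩ := join p q h.rr hpr hqr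
  obtain ⟨ε3, hε3, hc1, hS1⟩ := pbk_coc h hε1 hs1 hd1 hp hqD
  have hthS : Supp ((δ1 + δ2) / 2) ((δ2 - δ1) / 2) (k + 1) (th e) := by
    intro l hl hsm ⟨z, hz, hz'⟩
    by_contra hne
    have h1 := th_supp (by linarith [h.d12]) hsm hne z hz
    have h2 := dist_triangle z e 0
    simp only [dist_zero_right] at h2
    linarith
  have d12 := h.d12
  have d1 := h.d1
  obtain ⟨c, d, hcd, ε5, hε5, χ, χ0, χs, hχ⟩ := thB (pbk g δ Ψ1) (th e)
    (R := (δ1 + δ2) / 2) (R' := δ2) (by linarith) (by linarith)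
    (lt_min hε3 (show 0 < (δ2 - δ1) / 2 by linarith))
    (fun l hl hsm => hc1 l hl (hsm.mono (min_le_left _ _)))
    (fun l hl hsm => th_del _ _) (hS1.mono (by linarith) (min_le_left _ _))
    (hthS.mono le_rfl (min_le_right _ _))
  have hc : c = 1 := by
    rcases mulcases c d hcd with ⟨rfl, rfl⟩ | ⟨rfl, rfl⟩ | ⟨rfl, rfl⟩
    · rfl
    · rfl
    · exact (thA e χ δ2 ε5 hε5 χ0 χs (by simpa using hχ)).elim
  subst hc
  -- continuity of g at e
  obtain ⟨ε6, hε6, hge⟩ := Metric.continuousOn_iff.1 h.hc e heB s hs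
  let ε := min ε5 (min ε1 ε6)
  have hε : 0 < ε := lt_min hε5 (lt_min hε1 hε6)
  have ea : ε ≤ ε5 := min_le_left _ _
  have eb : ε ≤ ε1 := (min_le_right _ _).trans (min_le_left _ _)
  have ec : ε ≤ ε6 := (min_le_right _ _).trans (min_le_right _ _)
  refine core h (Ψ := Ψ1) (χ := χ) (ε := ε) (p := p) (q := q) (F := D \ Metric.ball (g e) s)
    (A := A) hε (hs1.mono le_rfl eb) (fun l hl hsm => hd1 l hl (hsm.mono eb)) χ0
    (χs.mono le_rfl ea) (hD.sdiff Metric.isOpen_ball) sdiff_subset ?_ (fun hh => hp hh.1)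
    (fun hh => hqD hh.1) hpr hqr hAo hpA (hsA' q hqs) ?_
  · intro l hl hsm hz
    rw [hχ l hl (hsm.mono ea)]
    have e0 : th e l = 0 := by
      by_contra hne
      match l, hl with
      | z :: t, _ =>
        have h1 := th_supp hε6 (hsm.mono ec) hne z (by simp)
        have h2 := hz z (by simp)
        exact h2.2.2 (Metric.mem_ball.2 (hge z (by simpa using h2.1) h1))
    rw [e0]
    simp only [pbk, if_pos (fun z hz' => (hz z hz').1), one_mul, mul_zero, add_zero]
  · intro w hw hwA hwR
    refine ⟨comp_bd hD p w hw hwA hwR, fun hws => ?_⟩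
    obtain ⟨v, hv1, hv2⟩ := mem_closure_iff.1 hw _ Metric.isOpen_ball hws
    exact hsA' v hv1 hv2

end AS

end Part7

section Part8

namespace AS

/-- a chart of `S` at `x` -/
structure Cht {N d : ℕ} (S : Set (Euc N)) (x : Euc N) (δ : ℝ) (W : Set (Euc N))
    (f : Euc N → (Fin d → ℝ)) (g : (Fin d → ℝ) → Euc N) : Prop where
  dpos : 0 < δ
  oW : IsOpen W
  xW : x ∈ W
  xS : x ∈ S
  cf : ContinuousOn f (S ∩ W)
  cg : ContinuousOn g (Metric.ball 0 δ)
  fx : f x = 0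
  mf : ∀ y ∈ S, y ∈ W → f y ∈ Metric.ball 0 δ
  mgS : ∀ z ∈ Metric.ball 0 δ, g z ∈ S
  mgW : ∀ z ∈ Metric.ball 0 δ, g z ∈ W
  gf : ∀ y ∈ S, y ∈ W → g (f y) = y
  fg : ∀ z ∈ Metric.ball 0 δ, f (g z) = z

theorem exists_cht {N d : ℕ} {S : Set (Euc N)} (hS : IsSimanifold d S) {x : Euc N} (hx : x ∈ S)
    {U : Set (Euc N)} (hU : IsOpen U) (hxU : x ∈ U) :
    ∃ (δ : ℝ) (W : Set (Euc N)) (f : Euc N → (Fin d → ℝ)) (g : (Fin d → ℝ) → Euc N),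
      Cht S x δ W f g ∧ W ⊆ U := by
  classical
  obtain ⟨_, _, ⟨ch⟩⟩ := hS
  let x' : S := ⟨x, hx⟩
  let c := ch.chartAt x'
  have hxc : x' ∈ c.source := ch.mem_chart_source x'
  let E : EuclideanSpace ℝ (Fin d) ≃L[ℝ] (Fin d → ℝ) := EuclideanSpace.equiv (Fin d) ℝ
  let h : EuclideanSpace ℝ (Fin d) ≃ₜ (Fin d → ℝ) :=
    E.toHomeomorph.trans (Homeomorph.addRight (-(E (c x'))))
  let e := c.transHomeomorph h
  have ex : e x' = 0 := by
    simp [e, h]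
  have hxe : x' ∈ e.source := by simpa [e] using hxc
  have hO : IsOpen (e.target ∩ e.symm ⁻¹' (Subtype.val ⁻¹' U)) :=
    e.isOpen_inter_preimage_symm (hU.preimage continuous_subtype_val)
  have h0 : (0 : Fin d → ℝ) ∈ e.target ∩ e.symm ⁻¹' (Subtype.val ⁻¹' U) := by
    rw [← ex]
    refine ⟨e.map_source hxe, ?_⟩
    rw [mem_preimage, e.left_inv hxe]; exact hxU
  obtain ⟨δ, hδ, hball⟩ := Metric.isOpen_iff.1 hO 0 h0
  have hV : IsOpen (e.source ∩ e ⁻¹' (Metric.ball 0 δ)) := e.isOpen_inter_preimage Metric.isOpen_ball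
  obtain ⟨W0, hW0, hW0e⟩ := isOpen_induced_iff.1 hV
  have memV : ∀ y (hy : y ∈ S), y ∈ W0 → (⟨y, hy⟩ : S) ∈ e.source ∩ e ⁻¹' (Metric.ball 0 δ) := by
    intro y hy hyW
    rw [← hW0e]; exact hyW
  let f : Euc N → (Fin d → ℝ) := fun y => if hy : y ∈ S then e ⟨y, hy⟩ else 0
  have fS : ∀ y : S, f y = e y := by
    intro y; simp only [f, dif_pos y.2]
  have memW : ∀ z ∈ Metric.ball 0 δ, (e.symm z : Euc N) ∈ W0 := by
    intro z hz
    have : e.symm z ∈ e.source ∩ e ⁻¹' (Metric.ball 0 δ) := by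
      refine ⟨e.map_target (hball hz).1, ?_⟩
      rw [mem_preimage, e.right_inv (hball hz).1]; exact hz
    rw [← hW0e] at this; exact this
  refine ⟨δ, W0 ∩ U, f, fun z => (e.symm z : Euc N), ⟨hδ, hW0.inter hU, ⟨?_, hxU⟩, hx, ?_, ?_, ?_, ?_,
    ?_, ?_, ?_, ?_⟩, inter_subset_right⟩
  · have : x' ∈ e.source ∩ e ⁻¹' (Metric.ball 0 δ) := by
      refine ⟨hxe, ?_⟩
      rw [mem_preimage, ex]; simpa using hδ
    rw [← hW0e] at this; exact this
  · intro y hy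
    have h1 := memV y hy.1 hy.2.1
    have hc : ContinuousAt e ⟨y, hy.1⟩ := e.continuousAt h1.1
    have h2 : ContinuousWithinAt f S y := by
      rw [continuousWithinAt_iff_continuousAt_domRestrict f hy.1]
      have : S.domRestrict f = e := by funext y; exact fS y
      rw [this]; exact hc
    exact h2.mono inter_subset_left
  · intro z hz
    exact ((continuous_subtype_val.continuousAt).comp
      (e.symm.continuousAt (hball hz).1)).continuousWithinAt
  · have := fS x'
    rw [ex] at this; exact this
  · intro y hy hyW
    have := fS ⟨y, hy⟩
    simp only at this
    rw [this]
    exact (memV y hy hyW.1).2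
  · intro z _; exact (e.symm z).2
  · intro z hz; exact ⟨memW z hz, (hball hz).2⟩
  · intro y hy hyW
    have := fS ⟨y, hy⟩
    simp only at this
    simp only [this, e.left_inv (memV y hy hyW.1).1]
  · intro z hz
    simp only [fS, e.right_inv (hball hz).1]

theorem Cht.g0 {N d : ℕ} {S : Set (Euc N)} {x : Euc N} {δ : ℝ} {W : Set (Euc N)}
    {f : Euc N → (Fin d → ℝ)} {g : (Fin d → ℝ) → Euc N} (h : Cht S x δ W f g) : g 0 = x := by
  rw [← h.fx, h.gf x h.xS h.xW]

theorem Cht.ginj {N d : ℕ} {S : Set (Euc N)} {x : Euc N} {δ : ℝ} {W : Set (Euc N)}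
    {f : Euc N → (Fin d → ℝ)} {g : (Fin d → ℝ) → Euc N} (h : Cht S x δ W f g)
    {a b : Fin d → ℝ} (ha : a ∈ Metric.ball 0 δ) (hb : b ∈ Metric.ball 0 δ) (hab : g a = g b) :
    a = b := by rw [← h.fg a ha, ← h.fg b hb, hab]

theorem Cht.finj {N d : ℕ} {S : Set (Euc N)} {x : Euc N} {δ : ℝ} {W : Set (Euc N)}
    {f : Euc N → (Fin d → ℝ)} {g : (Fin d → ℝ) → Euc N} (h : Cht S x δ W f g)
    {a b : Euc N} (ha : a ∈ S) (ha' : a ∈ W) (hb : b ∈ S) (hb' : b ∈ W) (hab : f a = f b) :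
    a = b := by rw [← h.gf a ha ha', ← h.gf b hb hb', hab]

theorem dim_le {N i j : ℕ} {S S' : Set (Euc N)} (hS : IsSimanifold j S) (hS' : IsSimanifold i S')
    {x : Euc N} (hx : x ∈ S) {V : Set (Euc N)} (hV : IsOpen V) (hxV : x ∈ V) (hsub : S ∩ V ⊆ S') :
    j ≤ i := by
  obtain ⟨δ', W', f', g', c', -⟩ := exists_cht hS' (hsub ⟨hx, hxV⟩) isOpen_univ trivial
  obtain ⟨δ, W, f, g, c, hWU⟩ := exists_cht hS hx (hV.inter c'.oW) ⟨hxV, c'.xW⟩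
  have hδ := c.dpos
  have hsubb : Metric.closedBall (0 : Fin j → ℝ) (δ / 2) ⊆ Metric.ball 0 δ :=
    Metric.closedBall_subset_ball (by linarith)
  have hg : ∀ z ∈ Metric.ball 0 δ, g z ∈ S' ∩ W' := fun z hz =>
    ⟨hsub ⟨c.mgS z hz, (hWU (c.mgW z hz)).1⟩, (hWU (c.mgW z hz)).2⟩
  apply T1 (fun z => f' (g z)) (δ := δ / 2) (by linarith)
  · exact c'.cf.comp (c.cg.mono hsubb) (fun z hz => hg z (hsubb hz))
  · intro a ha b hb hab
    have ha' := hg a (hsubb ha)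
    have hb' := hg b (hsubb hb)
    exact c.ginj (hsubb ha) (hsubb hb) (c'.finj ha'.1 ha'.2 hb'.1 hb'.2 hab)

theorem sdim_eq {N d : ℕ} {S : Set (Euc N)} (hS : IsSimanifold d S) : sdim S = d := by
  apply IsGreatest.csSup_eq
  refine ⟨⟨S, hS, le_rfl⟩, ?_⟩
  rintro i ⟨T, hT, hTS⟩
  obtain ⟨x, hx⟩ := hT.1
  exact dim_le hT hS hx isOpen_univ trivial (inter_subset_left.trans hTS)

theorem sim_conn {N d : ℕ} {S : Set (Euc N)} (hS : IsSimanifold d S) : IsPreconnected S := by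
  have := hS.2.1
  rw [isPreconnected_iff_preconnectedSpace]
  infer_instance

theorem two_sided {N k : ℕ} {X Q : Set (Euc N)} (hX : IsSimanifold (k + 1) X)
    (hQ : IsSimanifold k Q) (hQX : Q ⊆ X) {x : Euc N} (hx : x ∈ Q) {U : Set (Euc N)}
    (hU : IsOpen U) (hxU : x ∈ U) :
    ∃ V, IsOpen V ∧ x ∈ V ∧
      (∀ p1 ∈ (X ∩ V) \ Q, ∀ p2 ∈ (X ∩ V) \ Q, ∀ p3 ∈ (X ∩ V) \ Q,
        ∃ C, IsPreconnected C ∧ C ⊆ (X ∩ U) \ Q ∧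
          ((p1 ∈ C ∧ p2 ∈ C) ∨ (p1 ∈ C ∧ p3 ∈ C) ∨ (p2 ∈ C ∧ p3 ∈ C))) ∧
      (∀ p ∈ (X ∩ V) \ Q, ∀ y ∈ Q ∩ V,
        ∃ C, IsPreconnected C ∧ C ⊆ (X ∩ U) \ Q ∧ p ∈ C ∧ y ∈ closure C) := by
  obtain ⟨δX, W, F, G, cX, hWU⟩ := exists_cht hX (hQX hx) hU hxU
  obtain ⟨δQ, w, f, g, cQ, hwW⟩ := exists_cht hQ hx cX.oW cX.xW
  have hδQ := cQ.dpos
  have hsubb : Metric.closedBall (0 : Fin k → ℝ) (δQ / 2) ⊆ Metric.ball 0 δQ :=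
    Metric.closedBall_subset_ball (by linarith)
  let h : (Fin k → ℝ) → (Fin (k + 1) → ℝ) := fun z => F (g z)
  have hg : ∀ z ∈ Metric.ball 0 δQ, g z ∈ X ∩ W := fun z hz =>
    ⟨hQX (cQ.mgS z hz), hwW (cQ.mgW z hz)⟩
  have h0 : h 0 = 0 := by simp only [h, cQ.g0, cX.fx]
  have hcont : ContinuousOn h (Metric.closedBall 0 (δQ / 2)) :=
    cX.cf.comp (cQ.cg.mono hsubb) (fun z hz => hg z (hsubb hz))
  have hinj : InjOn h (Metric.closedBall 0 (δQ / 2)) := by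
    intro a ha b hb hab
    have ha' := hg a (hsubb ha)
    have hb' := hg b (hsubb hb)
    exact cQ.ginj (hsubb ha) (hsubb hb) (cX.finj ha'.1 ha'.2 hb'.1 hb'.2 hab)
  -- neighbourhood w' of x in which Q is inside the small disc
  obtain ⟨w0, hw0, hw0e⟩ := continuousOn_iff'.1 cQ.cf (Metric.ball 0 (δQ / 2)) Metric.isOpen_ball
  have hw' : ∀ y ∈ Q, y ∈ w0 → y ∈ w → ∃ u ∈ Metric.closedBall 0 (δQ / 2), g u = y := by
    intro y hy h1 h2
    have : y ∈ f ⁻¹' Metric.ball 0 (δQ / 2) ∩ (Q ∩ w) := by rw [hw0e]; exact ⟨h1, hy, h2⟩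
    exact ⟨f y, Metric.ball_subset_closedBall this.1, cQ.gf y hy h2⟩
  have hxw0 : x ∈ w0 := by
    have : x ∈ f ⁻¹' Metric.ball 0 (δQ / 2) ∩ (Q ∩ w) :=
      ⟨by rw [mem_preimage, cQ.fx]; simpa using hδQ, hx, cQ.xW⟩
    rw [hw0e] at this; exact this.1
  have hδX := cX.dpos
  have hGat : ∀ z ∈ Metric.ball 0 δX, ContinuousAt G z := fun z hz =>
    cX.cg.continuousAt (Metric.isOpen_ball.mem_nhds hz)
  obtain ⟨R, hR, hRw⟩ : ∃ R > 0, ∀ z : Fin (k + 1) → ℝ, ‖z‖ < R → ‖z‖ < δX ∧ G z ∈ w0 ∩ w := by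
    have h1 : G ⁻¹' (w0 ∩ w) ∈ nhds (0 : Fin (k + 1) → ℝ) := by
      apply hGat 0 (by simpa using hδX)
      rw [cX.g0]
      exact (hw0.inter cQ.oW).mem_nhds ⟨hxw0, cQ.xW⟩
    obtain ⟨R, hR, hb⟩ := Metric.mem_nhds_iff.1 h1
    refine ⟨min R δX, lt_min hR hδX, fun z hz => ⟨hz.trans_le (min_le_right _ _), ?_⟩⟩
    exact hb (by simpa using hz.trans_le (min_le_left _ _))
  obtain ⟨δ1, δ2, r, r', R1, loc⟩ := exists_Loc (by linarith) hcont hinj h0 hR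
  have hrR : r < R := by linarith [loc.rr, loc.r1, loc.R1R]
  have hr0 := loc.r0
  obtain ⟨v, hv, hve⟩ := continuousOn_iff'.1 cX.cf (Metric.ball 0 r) Metric.isOpen_ball
  have hFv : ∀ y ∈ X, y ∈ v → y ∈ W → ‖F y‖ < r := by
    intro y hy h1 h2
    have : y ∈ F ⁻¹' Metric.ball 0 r ∩ (X ∩ W) := by rw [hve]; exact ⟨h1, hy, h2⟩
    simpa using this.1
  have hxv : x ∈ v := by
    have : x ∈ F ⁻¹' Metric.ball 0 r ∩ (X ∩ W) :=
      ⟨by rw [mem_preimage, cX.fx]; simpa using hr0, hQX hx, cX.xW⟩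
    rw [hve] at this; exact this.1
  set D := h '' Metric.closedBall 0 (δQ / 2) with hD
  have offD : ∀ p ∈ X, p ∈ W → p ∉ Q → F p ∉ D := by
    rintro p hp hpW hpQ ⟨z, hz, hzp⟩
    have hz' := hg z (hsubb hz)
    have := cX.finj hz'.1 hz'.2 hp hpW hzp
    exact hpQ (this ▸ cQ.mgS z (hsubb hz))
  have onD : ∀ z, ‖z‖ < R → G z ∈ Q → z ∈ D := by
    intro z hz hzQ
    obtain ⟨hz1, hz2, hz3⟩ := hRw z hz
    obtain ⟨u, hu, hgu⟩ := hw' (G z) hzQ hz2 hz3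
    refine ⟨u, hu, ?_⟩
    simp only [h]
    rw [hgu]
    exact cX.fg z (by simpa using hz1)
  have tr : ∀ C' : Set (Fin (k + 1) → ℝ), IsPreconnected C' → C' ⊆ Metric.ball 0 R \ D →
      IsPreconnected (G '' C') ∧ G '' C' ⊆ (X ∩ U) \ Q ∧
      ∀ p ∈ X, p ∈ W → F p ∈ C' → p ∈ G '' C' := by
    intro C' hC hCs
    have hb : C' ⊆ Metric.ball 0 δX := fun z hz => by
      have := (hRw z (by simpa using (hCs hz).1)).1
      simpa using this
    refine ⟨hC.image G (cX.cg.mono hb), ?_, ?_⟩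
    · rintro _ ⟨z, hz, rfl⟩
      refine ⟨⟨cX.mgS z (hb hz), hWU (cX.mgW z (hb hz))⟩, fun hq => ?_⟩
      exact (hCs hz).2 (onD z (by simpa using (hCs hz).1) hq)
    · intro p hp hpW hpC
      exact ⟨F p, hpC, cX.gf p hp hpW⟩
  refine ⟨v ∩ W, hv.inter cX.oW, ⟨hxv, cX.xW⟩, ?_, ?_⟩
  · intro p1 h1 p2 h2 p3 h3
    obtain ⟨C', hC, hCs, hm⟩ := T2i loc (hFv p1 h1.1.1 h1.1.2.1 h1.1.2.2)
      (hFv p2 h2.1.1 h2.1.2.1 h2.1.2.2) (hFv p3 h3.1.1 h3.1.2.1 h3.1.2.2)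
      (offD p1 h1.1.1 h1.1.2.2 h1.2) (offD p2 h2.1.1 h2.1.2.2 h2.2) (offD p3 h3.1.1 h3.1.2.2 h3.2)
    obtain ⟨t1, t2, t3⟩ := tr C' hC hCs
    refine ⟨G '' C', t1, t2, ?_⟩
    rcases hm with ⟨a, b⟩ | ⟨a, b⟩ | ⟨a, b⟩
    · exact Or.inl ⟨t3 p1 h1.1.1 h1.1.2.2 a, t3 p2 h2.1.1 h2.1.2.2 b⟩
    · exact Or.inr (Or.inl ⟨t3 p1 h1.1.1 h1.1.2.2 a, t3 p3 h3.1.1 h3.1.2.2 b⟩)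
    · exact Or.inr (Or.inr ⟨t3 p2 h2.1.1 h2.1.2.2 a, t3 p3 h3.1.1 h3.1.2.2 b⟩)
  · intro p h1 y hy
    have hyr := hFv y (hQX hy.1) hy.2.1 hy.2.2
    have hyG : G (F y) = y := cX.gf y (hQX hy.1) hy.2.2
    obtain ⟨C', hC, hCs, hpC, hyC⟩ := T2ii loc (hFv p h1.1.1 h1.1.2.1 h1.1.2.2)
      hyr (offD p h1.1.1 h1.1.2.2 h1.2) (onD (F y) (hyr.trans hrR) (by rw [hyG]; exact hy.1))
    obtain ⟨t1, t2, t3⟩ := tr C' hC hCs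
    refine ⟨G '' C', t1, t2, t3 p h1.1.1 h1.1.2.2 hpC, ?_⟩
    have hat := hGat (F y) (cX.mf y (hQX hy.1) hy.2.2)
    have := hat.continuousWithinAt.mem_closure_image hyC
    rwa [hyG] at this

end AS

end Part8

section Part9

namespace AS

/-- a connected manifold cut into two pieces by a connected hypersurface -/
structure Cut {N : ℕ} (k : ℕ) (X X0 Xp Xm Op Om : Set (Euc N)) : Prop where
  simX : IsSimanifold (k + 1) X
  sim0 : IsSimanifold k X0
  un : ∀ x ∈ X, x ∈ Xp ∨ x ∈ X0 ∨ x ∈ Xm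
  s0 : X0 ⊆ X
  dp : ∀ x ∈ Xp, x ∉ X0
  dm : ∀ x ∈ Xm, x ∉ X0
  dpm : ∀ x ∈ Xp, x ∉ Xm
  oOp : IsOpen Op
  oOm : IsOpen Om
  ep : Xp = X ∩ Op
  em : Xm = X ∩ Om
  np : Xp.Nonempty
  nm : Xm.Nonempty

variable {N k : ℕ} {X X0 Xp Xm Op Om : Set (Euc N)}

theorem Cut.symm (h : Cut k X X0 Xp Xm Op Om) : Cut k X X0 Xm Xp Om Op :=
  ⟨h.simX, h.sim0, fun x hx => by have := h.un x hx; tauto, h.s0, h.dm, h.dp,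
    fun x hx hx' => h.dpm x hx' hx, h.oOm, h.oOp, h.em, h.ep, h.nm, h.np⟩

theorem Cut.side (h : Cut k X X0 Xp Xm Op Om) {C : Set (Euc N)} (hC : IsPreconnected C)
    (hCX : C ⊆ X) (hC0 : ∀ x ∈ C, x ∉ X0) {p : Euc N} (hp : p ∈ C) (hp' : p ∈ Xp) : C ⊆ Xp := by
  have key := isPreconnected_iff_subset_of_disjoint.1 hC Op Om h.oOp h.oOm
    (fun x hx => by
      rcases h.un x (hCX hx) with h1 | h1 | h1
      · rw [h.ep] at h1; exact Or.inl h1.2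
      · exact absurd h1 (hC0 x hx)
      · rw [h.em] at h1; exact Or.inr h1.2)
    (by
      rw [eq_empty_iff_forall_notMem]
      rintro x ⟨hx, hxp, hxm⟩
      exact h.dpm x (by rw [h.ep]; exact ⟨hCX hx, hxp⟩) (by rw [h.em]; exact ⟨hCX hx, hxm⟩))
  rcases key with key | key
  · intro x hx
    rw [h.ep]; exact ⟨hCX hx, key hx⟩
  · exact absurd (show p ∈ Xm by rw [h.em]; exact ⟨hCX hp, key hp⟩) (h.dpm p hp')

/-- the wall is in the closure of each side -/
theorem Cut.cl (h : Cut k X X0 Xp Xm Op Om) : X0 ⊆ closure Xp := by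
  have hXp : Xp ⊆ X := by rw [h.ep]; exact inter_subset_left
  have hop : ∀ x ∈ X0 ∩ closure Xp, ∃ V, IsOpen V ∧ x ∈ V ∧ X0 ∩ V ⊆ closure Xp := by
    intro x hx
    obtain ⟨V, hV, hxV, -, h2⟩ := two_sided h.simX h.sim0 h.s0 hx.1 isOpen_univ trivial
    refine ⟨V, hV, hxV, fun y hy => ?_⟩
    obtain ⟨p, hpV, hp⟩ := mem_closure_iff.1 hx.2 V hV hxV
    obtain ⟨C, hC, hCs, hpC, hyC⟩ := h2 p ⟨⟨hXp hp, hpV⟩, h.dp p hp⟩ y hy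
    exact closure_mono (h.side hC (fun z hz => (hCs hz).1.1) (fun z hz => (hCs hz).2) hpC hp) hyC
  let O : Set (Euc N) := ⋃₀ {V | IsOpen V ∧ X0 ∩ V ⊆ closure Xp}
  have hO : IsOpen O := isOpen_sUnion fun V hV => hV.1
  have hOc : X0 ∩ O ⊆ closure Xp := by
    rintro x ⟨hx, V, hV, hxV⟩
    exact hV.2 ⟨hx, hxV⟩
  have key := isPreconnected_iff_subset_of_disjoint.1 (sim_conn h.sim0) O (closure Xp)ᶜ hO
    isClosed_closure.isOpen_compl
    (fun x hx => by
      by_cases hxc : x ∈ closure Xp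
      · obtain ⟨V, hV, hxV, hVs⟩ := hop x ⟨hx, hxc⟩
        exact Or.inl ⟨V, ⟨hV, hVs⟩, hxV⟩
      · exact Or.inr hxc)
    (by
      rw [eq_empty_iff_forall_notMem]
      rintro x ⟨hx, hxO, hxc⟩
      exact hxc (hOc ⟨hx, hxO⟩))
  rcases key with key | key
  · exact fun x hx => hOc ⟨hx, key hx⟩
  · exfalso
    have hin : ∀ x ∈ X, x ∈ closure Xp → x ∈ Xp := by
      intro x hx hxc
      rcases h.un x hx with h1 | h1 | h1
      · exact h1
      · exact absurd hxc (key h1)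
      · rw [h.em] at h1
        obtain ⟨y, hy1, hy2⟩ := mem_closure_iff.1 hxc Om h.oOm h1.2
        exact absurd (show y ∈ Xm by rw [h.em]; exact ⟨hXp hy2, hy1⟩) (h.dpm y hy2)
    obtain ⟨x, hx⟩ := h.np
    obtain ⟨y, hy⟩ := h.nm
    have hyX : y ∈ X := by rw [h.em] at hy; exact hy.1
    obtain ⟨z, hz, hz1, hz2⟩ := sim_conn h.simX Op (closure Xp)ᶜ h.oOp isClosed_closure.isOpen_compl
      (fun x hx => by
        by_cases hxc : x ∈ closure Xp
        · have := hin x hx hxc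
          rw [h.ep] at this; exact Or.inl this.2
        · exact Or.inr hxc) ⟨x, hXp hx, by rw [h.ep] at hx; exact hx.2⟩
      ⟨y, hyX, fun hc => h.dpm y (hin y hyX hc) hy⟩
    exact hz2 (subset_closure (by rw [h.ep]; exact ⟨hz, hz1⟩))

theorem Cut.ne (h : Cut k X X0 Xp Xm Op Om) {O : Set (Euc N)} (hO : IsOpen O)
    (hne : (X0 ∩ O).Nonempty) : (Xp ∩ O).Nonempty := by
  obtain ⟨x, hx, hxO⟩ := hne
  obtain ⟨y, hy1, hy2⟩ := mem_closure_iff.1 (h.cl hx) O hO hxO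
  exact ⟨y, hy2, hy1⟩

/-- each side of an open piece is connected -/
theorem Cut.conn (h : Cut k X X0 Xp Xm Op Om) {O : Set (Euc N)} (hO : IsOpen O)
    (hZ : IsPreconnected (X ∩ O)) (hZ0 : IsPreconnected (X0 ∩ O)) (hne : (X0 ∩ O).Nonempty) :
    IsPreconnected (Xp ∩ O) := by
  have hXp : Xp ⊆ X := by rw [h.ep]; exact inter_subset_left
  intro u v hu hv hcov hnu hnv
  by_contra hdis
  rw [not_nonempty_iff_eq_empty, eq_empty_iff_forall_notMem] at hdis
  -- the common argument for nonemptiness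
  have half : ∀ u v : Set (Euc N), IsOpen u → IsOpen v → Xp ∩ O ⊆ u ∪ v →
      (Xp ∩ O ∩ u).Nonempty → (Xp ∩ O ∩ v).Nonempty → (∀ x, x ∉ Xp ∩ O ∩ (u ∩ v)) →
      (X0 ∩ O ∩ closure (Xp ∩ O ∩ u)).Nonempty := by
    intro u v hu hv hcov hnu hnv hdis
    by_contra hno
    rw [not_nonempty_iff_eq_empty, eq_empty_iff_forall_notMem] at hno
    have hin : ∀ x ∈ X ∩ O, x ∈ closure (Xp ∩ O ∩ u) → x ∈ Xp ∩ O ∩ u := by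
      rintro x ⟨hx, hxO⟩ hxc
      rcases h.un x hx with h1 | h1 | h1
      · refine ⟨⟨h1, hxO⟩, ?_⟩
        rcases hcov ⟨h1, hxO⟩ with h2 | h2
        · exact h2
        · obtain ⟨y, hy1, hy2⟩ := mem_closure_iff.1 hxc v hv h2
          exact absurd ⟨hy2.1, hy2.2, hy1⟩ (hdis y)
      · exact absurd ⟨⟨h1, hxO⟩, hxc⟩ (hno x)
      · rw [h.em] at h1
        obtain ⟨y, hy1, hy2⟩ := mem_closure_iff.1 hxc Om h.oOm h1.2
        exact absurd (show y ∈ Xm by rw [h.em]; exact ⟨hXp hy2.1.1, hy1⟩) (h.dpm y hy2.1.1)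
    obtain ⟨x, hx⟩ := hnu
    obtain ⟨y, hy⟩ := hnv
    obtain ⟨z, hz, hz1, hz2⟩ := hZ (Op ∩ u) (closure (Xp ∩ O ∩ u))ᶜ (h.oOp.inter hu)
      isClosed_closure.isOpen_compl
      (fun x hx => by
        by_cases hxc : x ∈ closure (Xp ∩ O ∩ u)
        · have := hin x hx hxc
          rw [h.ep] at this; exact Or.inl ⟨this.1.1.2, this.2⟩
        · exact Or.inr hxc)
      ⟨x, ⟨hXp hx.1.1, hx.1.2⟩, ⟨by have := hx.1.1; rw [h.ep] at this; exact this.2, hx.2⟩⟩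
      ⟨y, ⟨hXp hy.1.1, hy.1.2⟩, fun hc =>
        hdis y ⟨hy.1, (hin y ⟨hXp hy.1.1, hy.1.2⟩ hc).2, hy.2⟩⟩
    exact hz2 (subset_closure ⟨⟨by rw [h.ep]; exact ⟨hz.1, hz1.1⟩, hz.2⟩, hz1.2⟩)
  have n1 := half u v hu hv hcov hnu hnv hdis
  have n2 := half v u hv hu (by rwa [union_comm]) hnv hnu (by simpa [inter_comm u v] using hdis)
  have hcl : X0 ∩ O ⊆ closure (Xp ∩ O ∩ u) ∪ closure (Xp ∩ O ∩ v) := by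
    rintro x ⟨hx, hxO⟩
    rw [← closure_union, ← inter_union_distrib_left, inter_eq_left.2 hcov]
    rw [mem_closure_iff]
    intro o ho hxo
    obtain ⟨y, hy1, hy2⟩ := mem_closure_iff.1 (h.cl hx) (o ∩ O) (ho.inter hO) ⟨hxo, hxO⟩
    exact ⟨y, hy1.1, hy2, hy1.2⟩
  obtain ⟨x, ⟨hx0, hxO⟩, hxu, hxv⟩ := isPreconnected_closed_iff.1 hZ0 _ _ isClosed_closure
    isClosed_closure hcl n1 n2
  obtain ⟨V, hV, hxV, h1, -⟩ := two_sided h.simX h.sim0 h.s0 hx0 hO hxO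
  obtain ⟨p1, hp1V, hp1⟩ := mem_closure_iff.1 hxu V hV hxV
  obtain ⟨p2, hp2V, hp2⟩ := mem_closure_iff.1 hxv V hV hxV
  obtain ⟨p3, hp3V, hp3⟩ := mem_closure_iff.1 (h.symm.cl hx0) V hV hxV
  have hp3X : p3 ∈ X := by rw [h.em] at hp3; exact hp3.1
  obtain ⟨C, hC, hCs, hm⟩ := h1 p1 ⟨⟨hXp hp1.1.1, hp1V⟩, h.dp _ hp1.1.1⟩
    p2 ⟨⟨hXp hp2.1.1, hp2V⟩, h.dp _ hp2.1.1⟩ p3 ⟨⟨hp3X, hp3V⟩, h.dm _ hp3⟩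
  have sd : ∀ p ∈ Xp, p ∈ C → C ⊆ Xp := fun p hp hpC =>
    h.side hC (fun z hz => (hCs hz).1.1) (fun z hz => (hCs hz).2) hpC hp
  rcases hm with ⟨a, b⟩ | ⟨a, b⟩ | ⟨a, b⟩
  · have hCp := sd p1 hp1.1.1 a
    obtain ⟨z, hz, hz1, hz2⟩ := hC u v hu hv (fun z hz => hcov ⟨hCp hz, (hCs hz).1.2⟩)
      ⟨p1, a, hp1.2⟩ ⟨p2, b, hp2.2⟩
    exact hdis z ⟨⟨hCp hz, (hCs hz).1.2⟩, hz1, hz2⟩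
  · exact h.dpm p3 (sd p1 hp1.1.1 a b) hp3
  · exact h.dpm p3 (sd p2 hp2.1.1 a b) hp3

end AS

end Part9

section Part10

namespace AS

section dehyp

variable {N n : ℕ} {T : Set (Euc N)} (P : Dehyperplane N n T)

theorem P_closed : IsClosed P.P := by
  rw [← P.closure_eq]; exact isClosed_closure.inter isClosed_closure

theorem P_sub : P.P ⊆ T := by
  intro x hx; rw [← P.union_eq]; exact Or.inl (Or.inr hx)

theorem plus_sub : P.plus ⊆ T := by
  intro x hx; rw [← P.union_eq]; exact Or.inl (Or.inl hx)

theorem minus_sub : P.minus ⊆ T := by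
  intro x hx; rw [← P.union_eq]; exact Or.inr hx

theorem tri {x : Euc N} (hx : x ∈ T) : x ∈ P.plus ∨ x ∈ P.P ∨ x ∈ P.minus := by
  rw [← P.union_eq] at hx
  rcases hx with (h | h) | h <;> tauto

theorem pP {x : Euc N} (h : x ∈ P.plus) (h' : x ∈ P.P) : False :=
  disjoint_left.1 P.disj_pP h h'

theorem pm {x : Euc N} (h : x ∈ P.plus) (h' : x ∈ P.minus) : False :=
  disjoint_left.1 P.disj_pm h h'

theorem Pm {x : Euc N} (h : x ∈ P.P) (h' : x ∈ P.minus) : False :=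
  disjoint_left.1 P.disj_Pm h h'

theorem plus_iff {x : Euc N} (hx : x ∈ T) : x ∈ P.plus ↔ x ∉ closure P.minus := by
  constructor
  · intro h h'
    refine pP P h ?_
    rw [← P.closure_eq]; exact ⟨subset_closure h, h'⟩
  · intro h
    rcases tri P hx with h1 | h1 | h1
    · exact h1
    · rw [← P.closure_eq] at h1; exact absurd h1.2 h
    · exact absurd (subset_closure h1) h

theorem minus_iff {x : Euc N} (hx : x ∈ T) : x ∈ P.minus ↔ x ∉ closure P.plus := by
  constructor
  · intro h h'
    refine Pm P ?_ h
    rw [← P.closure_eq]; exact ⟨h', subset_closure h⟩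
  · intro h
    rcases tri P hx with h1 | h1 | h1
    · exact absurd (subset_closure h1) h
    · rw [← P.closure_eq] at h1; exact absurd h1.1 h
    · exact h1

open Classical in
/-- the sign of a point -/
def sg (x : Euc N) : SignType := if x ∈ P.plus then 1 else if x ∈ P.minus then -1 else 0

theorem sg_pos {x : Euc N} : sg P x = 1 ↔ x ∈ P.plus := by
  unfold sg; split_ifs <;> simp_all

theorem sg_neg {x : Euc N} : sg P x = -1 ↔ x ∈ P.minus := by
  unfold sg; split_ifs with h h'
  · simp only [show ¬ ((1 : SignType) = -1) by decide, false_iff]; exact fun h' => pm P h h'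
  · simp_all
  · simp_all

theorem sg_zero {x : Euc N} (hx : x ∈ T) : sg P x = 0 ↔ x ∈ P.P := by
  have := tri P hx
  unfold sg; split_ifs with h h'
  · simp only [one_ne_zero, false_iff]; exact fun h' => pP P h h'
  · simp only [show ¬ ((-1 : SignType) = 0) by decide, false_iff]; exact fun h => Pm P h h'
  · simp_all

theorem mem_part {x : Euc N} (hx : x ∈ T) (s : SignType) : x ∈ P.part s ↔ sg P x = s := by
  cases s
  · exact (sg_zero P hx).symm
  · exact (sg_neg P).symm
  · exact (sg_pos P).symm

/-- the open set on the side `s` -/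
def opn (s : SignType) : Set (Euc N) := if s = 1 then (closure P.minus)ᶜ else (closure P.plus)ᶜ

theorem opn_open (s : SignType) : IsOpen (opn P s) := by
  unfold opn; split_ifs <;> exact isClosed_closure.isOpen_compl

theorem mem_opn {x : Euc N} (hx : x ∈ T) {s : SignType} (hs : s ≠ 0) :
    x ∈ opn P s ↔ sg P x = s := by
  cases s
  · exact absurd rfl hs
  · exact (minus_iff P hx).symm.trans (sg_neg P).symm
  · exact (plus_iff P hx).symm.trans (sg_pos P).symm

end dehyp

section arr

variable {N n : ℕ} {T : Set (Euc N)} {A : Set (Dehyperplane N n T)}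

theorem flat_sub {X : Set (Euc N)} (hX : X ∈ flats A) : X ⊆ T := by
  obtain ⟨-, B, -, rfl⟩ := hX; exact inter_subset_left

theorem flat_mem (hA : IsDA n T A) {X : Set (Euc N)} (hX : X ∈ flats A) {P : Dehyperplane N n T}
    (hP : P ∈ A) (hne : (P.P ∩ X).Nonempty) : P.P ∩ X ∈ flats A := by
  obtain ⟨-, B, hB, rfl⟩ := hX
  refine ⟨hne, insert P B, insert_subset hP hB, ?_⟩
  ext x; simp; tauto

theorem flat_rel {X : Set (Euc N)} (hX : X ∈ flats A) {x : Euc N} (hx : x ∈ T)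
    (hc : x ∈ closure X) : x ∈ X := by
  obtain ⟨-, B, hB, rfl⟩ := hX
  refine ⟨hx, ?_⟩
  have : IsClosed (⋂ P ∈ B, P.P) := isClosed_biInter fun P _ => P_closed P
  exact this.closure_subset_iff.2 inter_subset_right hc

theorem flat_sim (hT : IsSimanifold n T) (hA : IsDA n T A) {X : Set (Euc N)} (hX : X ∈ flats A) :
    ∃ d, IsSimanifold d X := by
  obtain ⟨hne, B, hB, rfl⟩ := hX
  have hfin : B.Finite := hA.1.subset hB
  induction B, hfin using Set.Finite.induction_on with
  | empty => exact ⟨n, by simpa using hT⟩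
  | @insert P B hPB hBf ih =>
    have he : T ∩ ⋂ Q ∈ insert P B, Q.P = P.P ∩ (T ∩ ⋂ Q ∈ B, Q.P) := by
      ext x; simp; tauto
    rw [he] at hne ⊢
    have hB' : B ⊆ A := (subset_insert _ _).trans hB
    have hne' : (T ∩ ⋂ Q ∈ B, Q.P).Nonempty := hne.mono inter_subset_right
    rcases hA.2 P (hB (mem_insert _ _)) _ ⟨hne', B, hB', rfl⟩ hne with h | ⟨i, -, -, h, -⟩
    · rw [inter_eq_right.2 h]; exact ih hB' hne'
    · exact ⟨_, h⟩

theorem crossing (hT : IsSimanifold n T) (hA : IsDA n T A) {X : Set (Euc N)} (hX : X ∈ flats A)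
    {P : Dehyperplane N n T} (hP : P ∈ A) (hne : (P.P ∩ X).Nonempty) (hns : ¬ X ⊆ P.P) :
    ∃ k, Cut k X (P.P ∩ X) (P.plus ∩ X) (P.minus ∩ X) (opn P 1) (opn P (-1)) ∧
      IsSimanifold (k + 1) (P.plus ∩ X) ∧ IsSimanifold (k + 1) (P.minus ∩ X) := by
  obtain ⟨d, hd⟩ := flat_sim hT hA hX
  have hXT := flat_sub hX
  rcases hA.2 P hP X hX hne with h | ⟨i, hi, -, h0, hp, hm⟩
  · exact absurd h hns
  have ep : P.plus ∩ X = X ∩ opn P 1 := by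
    ext x
    constructor
    · rintro ⟨h1, h2⟩
      exact ⟨h2, (mem_opn P (hXT h2) (by decide)).2 ((sg_pos P).2 h1)⟩
    · rintro ⟨h2, h1⟩
      exact ⟨(sg_pos P).1 ((mem_opn P (hXT h2) (by decide)).1 h1), h2⟩
  have em : P.minus ∩ X = X ∩ opn P (-1) := by
    ext x
    constructor
    · rintro ⟨h1, h2⟩
      exact ⟨h2, (mem_opn P (hXT h2) (by decide)).2 ((sg_neg P).2 h1)⟩
    · rintro ⟨h2, h1⟩
      exact ⟨(sg_neg P).1 ((mem_opn P (hXT h2) (by decide)).1 h1), h2⟩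
  obtain ⟨x, hx⟩ := hp.1
  have h1 : i ≤ d := dim_le hp hd hx isOpen_univ trivial (fun y hy => hy.1.2)
  have h2 : d ≤ i := dim_le hd hp hx.2 (opn_open P 1) (ep ▸ hx).2 (fun y hy => ep ▸ hy)
  obtain rfl : i = d := le_antisymm h1 h2
  obtain ⟨k, rfl⟩ : ∃ k, i = k + 1 := ⟨i - 1, by omega⟩
  refine ⟨k, ⟨hd, h0, ?_, inter_subset_right, ?_, ?_, ?_, opn_open _ _, opn_open _ _, ep, em,
    hp.1, hm.1⟩, hp, hm⟩
  · intro x hx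
    have := tri P (hXT hx)
    simp only [mem_inter_iff]; tauto
  · exact fun x hx hx' => pP P hx.1 hx'.1
  · exact fun x hx hx' => Pm P hx'.1 hx.1
  · exact fun x hx hx' => pm P hx.1 hx'.1

/-- a preconnected set missing `P` is on one side -/
theorem one_side {C : Set (Euc N)} (hC : IsPreconnected C) (hCT : C ⊆ T)
    (P : Dehyperplane N n T) (h0 : ∀ x ∈ C, x ∉ P.P) {x y : Euc N} (hx : x ∈ C) (hy : y ∈ C) :
    sg P x = sg P y := by
  have key := isPreconnected_iff_subset_of_disjoint.1 hC (opn P 1) (opn P (-1))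
    (opn_open _ _) (opn_open _ _)
    (fun z hz => by
      rcases tri P (hCT hz) with h1 | h1 | h1
      · exact Or.inl ((mem_opn P (hCT hz) (by decide)).2 ((sg_pos P).2 h1))
      · exact absurd h1 (h0 z hz)
      · exact Or.inr ((mem_opn P (hCT hz) (by decide)).2 ((sg_neg P).2 h1)))
    (by
      rw [eq_empty_iff_forall_notMem]
      rintro z ⟨hz, hzp, hzm⟩
      have h1 := (mem_opn P (hCT hz) (by decide)).1 hzp
      have h2 := (mem_opn P (hCT hz) (by decide)).1 hzm
      rw [h1] at h2; exact absurd h2 (by decide))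
  rcases key with k | k
  · rw [(mem_opn P (hCT hx) (by decide)).1 (k hx), (mem_opn P (hCT hy) (by decide)).1 (k hy)]
  · rw [(mem_opn P (hCT hx) (by decide)).1 (k hx), (mem_opn P (hCT hy) (by decide)).1 (k hy)]

theorem flat_conn (hT : IsSimanifold n T) (hA : IsDA n T A) {X : Set (Euc N)} (hX : X ∈ flats A) :
    IsPreconnected X := by
  obtain ⟨d, hd⟩ := flat_sim hT hA hX
  exact sim_conn hd

/-- the open region -/
def reg (S : Set (Dehyperplane N n T)) (τ : Dehyperplane N n T → SignType) : Set (Euc N) :=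
  ⋂ P ∈ S, opn P (τ P)

theorem reg_open {S : Set (Dehyperplane N n T)} (hS : S.Finite)
    (τ : Dehyperplane N n T → SignType) : IsOpen (reg S τ) :=
  hS.isOpen_biInter fun P _ => opn_open _ _

theorem conn (hT : IsSimanifold n T) (hA : IsDA n T A) {S : Set (Dehyperplane N n T)}
    (hS : S ⊆ A) (τ : Dehyperplane N n T → SignType) (hτ : ∀ P ∈ S, τ P ≠ 0)
    {X : Set (Euc N)} (hX : X ∈ flats A) : IsPreconnected (X ∩ reg S τ) := by
  have hfin : S.Finite := hA.1.subset hS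
  induction S, hfin using Set.Finite.induction_on generalizing X with
  | empty => simpa [reg] using flat_conn hT hA hX
  | @insert P S hPS hSf ih =>
    have hS' : S ⊆ A := (subset_insert _ _).trans hS
    have hτ' : ∀ Q ∈ S, τ Q ≠ 0 := fun Q hQ => hτ Q (mem_insert_of_mem _ hQ)
    have hP : P ∈ A := hS (mem_insert _ _)
    have hτP : τ P ≠ 0 := hτ P (mem_insert _ _)
    have he : X ∩ reg (insert P S) τ = (X ∩ opn P (τ P)) ∩ reg S τ := by
      unfold reg; rw [biInter_insert]; ext x; simp [and_assoc]
    have hXT := flat_sub hX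
    have hZ := ih hS' hτ' hX
    rw [he]
    by_cases hZ0 : ∃ x ∈ X ∩ reg S τ, x ∈ P.P
    · by_cases hXP : X ⊆ P.P
      · have : (X ∩ opn P (τ P)) ∩ reg S τ = ∅ := by
          rw [eq_empty_iff_forall_notMem]
          rintro x ⟨⟨h1, h2⟩, -⟩
          rw [mem_opn P (hXT h1) hτP, (sg_zero P (hXT h1)).2 (hXP h1)] at h2
          exact hτP h2.symm
        rw [this]; exact isPreconnected_empty
      · obtain ⟨x, hx, hxP⟩ := hZ0
        have hne : (P.P ∩ X).Nonempty := ⟨x, hxP, hx.1⟩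
        obtain ⟨k, hc, -, -⟩ := crossing hT hA hX hP hne hXP
        have hne' : (P.P ∩ X ∩ reg S τ).Nonempty := ⟨x, ⟨hxP, hx.1⟩, hx.2⟩
        have h0 := ih hS' hτ' (flat_mem hA hX hP hne)
        cases hs : τ P
        · exact absurd hs hτP
        · have := hc.symm.conn (reg_open hSf τ) hZ h0 hne'
          rwa [hc.em] at this
        · have := hc.conn (reg_open hSf τ) hZ h0 hne'
          rwa [hc.ep] at this
    · push Not at hZ0
      rcases eq_empty_or_nonempty ((X ∩ opn P (τ P)) ∩ reg S τ) with h | ⟨y, hy⟩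
      · rw [h]; exact isPreconnected_empty
      · have : (X ∩ opn P (τ P)) ∩ reg S τ = X ∩ reg S τ := by
          apply Subset.antisymm
          · exact fun x hx => ⟨hx.1.1, hx.2⟩
          · intro x hx
            refine ⟨⟨hx.1, ?_⟩, hx.2⟩
            rw [mem_opn P (hXT hx.1) hτP, ← (mem_opn P (hXT hy.1.1) hτP).1 hy.1.2]
            exact one_side hZ (fun z hz => hXT hz.1) P hZ0 hx ⟨hy.1.1, hy.2⟩
        rw [this]; exact hZ

end arr

end AS

end Part10

section Part11

namespace AS

section euler

open Classical

variable {N n : ℕ} {T : Set (Euc N)} {A : Set (Dehyperplane N n T)}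

/-- the sign vector of a point -/
def sv (A : Set (Dehyperplane N n T)) (x : Euc N) : Dehyperplane N n T → SignType :=
  fun P => if P ∈ A then sg P x else 0

theorem sv_mem {P : Dehyperplane N n T} (hP : P ∈ A) (x : Euc N) : sv A x P = sg P x :=
  if_pos hP

theorem sv_finite (hA : A.Finite) (T' : Set (Euc N)) : (sv A '' T').Finite := by
  haveI : Finite A := hA
  let e : (A → SignType) → (Dehyperplane N n T → SignType) :=
    fun f P => if h : P ∈ A then f ⟨P, h⟩ else 0
  refine (Set.finite_range e).subset ?_
  rintro _ ⟨x, -, rfl⟩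
  refine ⟨fun P => sg P.1 x, ?_⟩
  funext P
  by_cases h : P ∈ A <;> simp [e, sv, h]

/-- the flat spanned by a partial sign vector -/
def Fl (S : Set (Dehyperplane N n T)) (τ : Dehyperplane N n T → SignType) : Set (Euc N) :=
  {x | x ∈ T ∧ ∀ P ∈ S, τ P = 0 → x ∈ P.P}

/-- the cell of a partial sign vector -/
def Ce (S : Set (Dehyperplane N n T)) (τ : Dehyperplane N n T → SignType) : Set (Euc N) :=
  {x | x ∈ T ∧ ∀ P ∈ S, sg P x = τ P}

theorem Ce_sub_Fl (S : Set (Dehyperplane N n T)) (τ) : Ce S τ ⊆ Fl S τ :=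
  fun _ hx => ⟨hx.1, fun P hP h0 => (sg_zero P hx.1).1 ((hx.2 P hP).trans h0)⟩

theorem Fl_flat {S : Set (Dehyperplane N n T)} (hS : S ⊆ A) {τ} (hne : (Ce S τ).Nonempty) :
    Fl S τ ∈ flats A := by
  refine ⟨hne.mono (Ce_sub_Fl S τ), {P | P ∈ S ∧ τ P = 0}, fun P hP => hS hP.1, ?_⟩
  ext x; simp [Fl]

theorem Ce_eq (S : Set (Dehyperplane N n T)) (τ : Dehyperplane N n T → SignType) :
    Ce S τ = Fl S τ ∩ reg {P | P ∈ S ∧ τ P ≠ 0} τ := by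
  ext x
  simp only [reg, mem_inter_iff, mem_iInter]
  constructor
  · intro hx
    refine ⟨Ce_sub_Fl S τ hx, fun P hP => ?_⟩
    rw [mem_opn P hx.1 hP.2]; exact hx.2 P hP.1
  · rintro ⟨hx, h⟩
    refine ⟨hx.1, fun P hP => ?_⟩
    by_cases h0 : τ P = 0
    · rw [h0, sg_zero P hx.1]; exact hx.2 P hP h0
    · exact (mem_opn P hx.1 h0).1 (h P ⟨hP, h0⟩)

theorem Ce_conn (hT : IsSimanifold n T) (hA : IsDA n T A) {S : Set (Dehyperplane N n T)}
    (hS : S ⊆ A) (τ) (hne : (Ce S τ).Nonempty) : IsPreconnected (Ce S τ) := by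
  rw [Ce_eq]
  exact conn hT hA (fun P hP => hS hP.1) τ (fun P hP => hP.2) (Fl_flat hS hne)

theorem Fl_ins0 {S : Set (Dehyperplane N n T)} {P : Dehyperplane N n T} (hP : P ∉ S) (τ) :
    Fl (insert P S) (Function.update τ P 0) = P.P ∩ Fl S τ := by
  ext x
  constructor
  · intro hx
    refine ⟨hx.2 P (mem_insert _ _) (by simp), hx.1, fun Q hQ h0 => ?_⟩
    have hQP : Q ≠ P := fun h => hP (h ▸ hQ)
    exact hx.2 Q (mem_insert_of_mem _ hQ) (by rwa [Function.update_of_ne hQP])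
  · rintro ⟨hxP, hx⟩
    refine ⟨hx.1, fun Q hQ h0 => ?_⟩
    rcases hQ with rfl | hQ
    · exact hxP
    · have hQP : Q ≠ P := fun h => hP (h ▸ hQ)
      rw [Function.update_of_ne hQP] at h0
      exact hx.2 Q hQ h0

theorem Fl_ins {S : Set (Dehyperplane N n T)} {P : Dehyperplane N n T} (hP : P ∉ S) (τ)
    {s : SignType} (hs : s ≠ 0) :
    Fl (insert P S) (Function.update τ P s) = Fl S τ := by
  ext x
  constructor
  · intro hx
    refine ⟨hx.1, fun Q hQ h0 => ?_⟩
    have hQP : Q ≠ P := fun h => hP (h ▸ hQ)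
    exact hx.2 Q (mem_insert_of_mem _ hQ) (by rwa [Function.update_of_ne hQP])
  · rintro hx
    refine ⟨hx.1, fun Q hQ h0 => ?_⟩
    by_cases hQP : Q = P
    · subst hQP; simp [hs] at h0
    · rw [Function.update_of_ne hQP] at h0
      exact hx.2 Q (hQ.resolve_left hQP) h0

theorem Ce_ins {S : Set (Dehyperplane N n T)} {P : Dehyperplane N n T} (hP : P ∉ S) (τ)
    (s : SignType) {x : Euc N} :
    x ∈ Ce (insert P S) (Function.update τ P s) ↔ x ∈ Ce S τ ∧ sg P x = s := by
  constructor
  · intro hx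
    refine ⟨⟨hx.1, fun Q hQ => ?_⟩, ?_⟩
    · have hQP : Q ≠ P := fun h => hP (h ▸ hQ)
      rw [hx.2 Q (mem_insert_of_mem _ hQ), Function.update_of_ne hQP]
    · simpa using hx.2 P (mem_insert _ _)
  · rintro ⟨hx, hs⟩
    refine ⟨hx.1, fun Q hQ => ?_⟩
    by_cases hQP : Q = P
    · subst hQP; simpa using hs
    · rw [Function.update_of_ne hQP]
      exact hx.2 Q (hQ.resolve_left hQP)

/-- the Euler characteristic sum -/
def Eu (A : Set (Dehyperplane N n T)) (V : Finset (Dehyperplane N n T → SignType))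
    (S : Set (Dehyperplane N n T)) (τ : Dehyperplane N n T → SignType) : ℤ :=
  ∑ v ∈ V.filter (fun v => ∀ P ∈ S, v P = τ P), (-1 : ℤ) ^ sdim (Fl A v)

theorem Eu_split (V : Finset (Dehyperplane N n T → SignType))
    {S : Set (Dehyperplane N n T)} {P : Dehyperplane N n T} (hP : P ∉ S) (τ) :
    Eu A V S τ = Eu A V (insert P S) (Function.update τ P 0) +
      (Eu A V (insert P S) (Function.update τ P (-1)) +
      Eu A V (insert P S) (Function.update τ P 1)) := by
  have key : ∀ s : SignType, Eu A V (insert P S) (Function.update τ P s) =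
      ∑ v ∈ (V.filter (fun v => ∀ P ∈ S, v P = τ P)).filter (fun v => v P = s),
        (-1 : ℤ) ^ sdim (Fl A v) := by
    intro s
    unfold Eu
    rw [Finset.filter_filter]
    refine Finset.sum_congr (Finset.filter_congr fun v _ => ?_) fun _ _ => rfl
    constructor
    · intro h
      refine ⟨fun Q hQ => ?_, by simpa using h P (mem_insert _ _)⟩
      have hQP : Q ≠ P := fun h => hP (h ▸ hQ)
      rw [h Q (mem_insert_of_mem _ hQ), Function.update_of_ne hQP]
    · rintro ⟨h, hs⟩ Q hQ
      by_cases hQP : Q = P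
      · subst hQP; simpa using hs
      · rw [Function.update_of_ne hQP]; exact h Q (hQ.resolve_left hQP)
  rw [key, key, key]
  unfold Eu
  rw [← Finset.sum_fiberwise (V.filter (fun v => ∀ P ∈ S, v P = τ P)) (fun v => v P)]
  rw [show (Finset.univ : Finset SignType) = {0, -1, 1} from rfl]
  rw [Finset.sum_insert (by decide), Finset.sum_insert (by decide), Finset.sum_singleton]

theorem Eu_empty {V : Finset (Dehyperplane N n T → SignType)}
    (hV : ∀ v, v ∈ V ↔ ∃ x ∈ T, sv A x = v) {S : Set (Dehyperplane N n T)} (hS : S ⊆ A) (τ)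
    (h : ∀ x, x ∉ Ce S τ) : Eu A V S τ = 0 := by
  unfold Eu
  rw [Finset.filter_eq_empty_iff.2, Finset.sum_empty]
  intro v hv hvτ
  obtain ⟨x, hx, rfl⟩ := (hV v).1 hv
  exact h x ⟨hx, fun P hP => by rw [← hvτ P hP, sv_mem (hS hP)]⟩

theorem euler (hT : IsSimanifold n T) (hA : IsDA n T A)
    {V : Finset (Dehyperplane N n T → SignType)}
    (hV : ∀ v, v ∈ V ↔ ∃ x ∈ T, sv A x = v)
    {R : Set (Dehyperplane N n T)} (hR : R.Finite) :
    ∀ S : Set (Dehyperplane N n T), S ⊆ A → A ⊆ S ∪ R → ∀ τ, (Ce S τ).Nonempty →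
      Eu A V S τ = (-1 : ℤ) ^ sdim (Fl S τ) := by
  induction R, hR using Set.Finite.induction_on with
  | empty =>
    intro S hS hSA τ ⟨x, hx⟩
    obtain rfl : S = A := Subset.antisymm hS (by simpa using hSA)
    have hf : V.filter (fun v => ∀ P ∈ S, v P = τ P) = {sv S x} := by
      ext v
      rw [Finset.mem_filter, Finset.mem_singleton]
      constructor
      · rintro ⟨hv, h⟩
        obtain ⟨y, hy, rfl⟩ := (hV v).1 hv
        funext P
        by_cases hP : P ∈ S
        · rw [h P hP, sv_mem hP, hx.2 P hP]
        · simp [sv, hP]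
      · rintro rfl
        exact ⟨(hV _).2 ⟨x, hx.1, rfl⟩, fun P hP => by rw [sv_mem hP, hx.2 P hP]⟩
    unfold Eu
    rw [hf, Finset.sum_singleton]
    congr 2
    ext y
    refine and_congr_right fun _ => forall₂_congr fun P hP => ?_
    rw [sv_mem hP, hx.2 P hP]
  | @insert P R hPR hRf ih =>
    intro S hS hSA τ hne
    by_cases hPS : P ∈ S ∨ P ∉ A
    · refine ih S hS (fun Q hQ => ?_) τ hne
      rcases hSA hQ with h | h | h
      · exact Or.inl h
      · subst h; exact Or.inl (hPS.resolve_right (fun h => h hQ))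
      · exact Or.inr h
    push Not at hPS
    obtain ⟨hPS, hPA⟩ := hPS
    have hS' : insert P S ⊆ A := insert_subset hPA hS
    have hSA' : A ⊆ insert P S ∪ R := fun Q hQ => by
      rcases hSA hQ with h | h | h
      · exact Or.inl (Or.inr h)
      · exact Or.inl (Or.inl h)
      · exact Or.inr h
    have IH := fun s => ih (insert P S) hS' hSA' (Function.update τ P s)
    have E0 := fun s => Eu_empty hV hS' (Function.update τ P s)
    have hX := Fl_flat hS hne
    have hXT := flat_sub hX
    rw [Eu_split V hPS τ]
    by_cases hZ0 : ∃ x ∈ Ce S τ, x ∈ P.P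
    · obtain ⟨x, hx, hxP⟩ := hZ0
      have hx0 : sg P x = 0 := (sg_zero P hx.1).2 hxP
      have h0 := IH 0 ⟨x, (Ce_ins hPS τ 0).2 ⟨hx, hx0⟩⟩
      rw [Fl_ins0 hPS] at h0
      by_cases hXP : Fl S τ ⊆ P.P
      · have hall : ∀ y ∈ Ce S τ, sg P y = 0 := fun y hy =>
          (sg_zero P hy.1).2 (hXP (Ce_sub_Fl S τ hy))
        rw [h0, E0 (-1), E0 1, inter_eq_right.2 hXP]
        · simp
        · intro y hy
          rw [Ce_ins hPS] at hy
          rw [hall y hy.1] at hy; exact absurd hy.2 (by decide)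
        · intro y hy
          rw [Ce_ins hPS] at hy
          rw [hall y hy.1] at hy; exact absurd hy.2 (by decide)
      · have hxX := Ce_sub_Fl S τ hx
        obtain ⟨k, hc, -, -⟩ := crossing hT hA hX hPA ⟨x, hxP, hxX⟩ hXP
        have hO : IsOpen (reg {P | P ∈ S ∧ τ P ≠ 0} τ) :=
          reg_open (hA.1.subset fun P hP => hS hP.1) τ
        have hxr : x ∈ Fl S τ ∩ reg {P | P ∈ S ∧ τ P ≠ 0} τ := by rw [← Ce_eq]; exact hx
        have hne0 : (P.P ∩ Fl S τ ∩ reg {P | P ∈ S ∧ τ P ≠ 0} τ).Nonempty :=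
          ⟨x, ⟨hxP, hxX⟩, hxr.2⟩
        obtain ⟨y, hy, hyr⟩ := hc.ne hO hne0
        obtain ⟨z, hz, hzr⟩ := hc.symm.ne hO hne0
        have hyC : y ∈ Ce S τ := by rw [Ce_eq]; exact ⟨hy.2, hyr⟩
        have hzC : z ∈ Ce S τ := by rw [Ce_eq]; exact ⟨hz.2, hzr⟩
        have h1 := IH 1 ⟨y, (Ce_ins hPS τ 1).2 ⟨hyC, (sg_pos P).2 hy.1⟩⟩
        have h2 := IH (-1) ⟨z, (Ce_ins hPS τ (-1)).2 ⟨hzC, (sg_neg P).2 hz.1⟩⟩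
        rw [Fl_ins hPS τ (by decide)] at h1 h2
        rw [h0, h1, h2, sdim_eq hc.simX, sdim_eq hc.sim0]
        ring
    · push Not at hZ0
      obtain ⟨x, hx⟩ := hne
      have hall : ∀ y ∈ Ce S τ, sg P y = sg P x := fun y hy =>
        one_side (Ce_conn hT hA hS τ ⟨x, hx⟩) (fun z hz => hz.1) P hZ0 hy hx
      have hxs : sg P x ≠ 0 := fun h => hZ0 x hx ((sg_zero P hx.1).1 h)
      have h0 := IH (sg P x) ⟨x, (Ce_ins hPS τ _).2 ⟨hx, rfl⟩⟩
      rw [Fl_ins hPS τ hxs] at h0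
      have hE : ∀ s, s ≠ sg P x → Eu A V (insert P S) (Function.update τ P s) = 0 := by
        intro s hs
        refine E0 s fun y hy => ?_
        rw [Ce_ins hPS] at hy
        exact hs (hy.2.symm.trans (hall y hy.1))
      generalize sg P x = s at *
      rw [hE 0 (Ne.symm hxs)]
      cases s
      · exact absurd rfl hxs
      · have h1 := hE 1 (by decide)
        rw [h1]; simpa using h0
      · have h1 := hE (-1) (by decide)
        rw [h1]; simpa using h0

end euler

end AS

end Part11

section Part12

namespace AS

section count

open Classical

variable {N n : ℕ} {T : Set (Euc N)} {A : Set (Dehyperplane N n T)}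

theorem flats_finite (hA : A.Finite) : (flats A).Finite := by
  refine (hA.finite_subsets.image fun B => T ∩ ⋂ P ∈ B, P.P).subset ?_
  rintro X ⟨-, B, hB, rfl⟩
  exact ⟨B, hB, rfl⟩

theorem Fl_sv_flat {x : Euc N} (hx : x ∈ T) : Fl A (sv A x) ∈ flats A :=
  Fl_flat Subset.rfl ⟨x, hx, fun _ hP => (sv_mem hP x).symm⟩

theorem mem_Fl_sv {x : Euc N} (hx : x ∈ T) : x ∈ Fl A (sv A x) :=
  ⟨hx, fun P hP h0 => (sg_zero P hx).1 (by rwa [sv_mem hP] at h0)⟩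

theorem flat_sum (hT : IsSimanifold n T) (hA : IsDA n T A)
    {V : Finset (Dehyperplane N n T → SignType)}
    (hV : ∀ v, v ∈ V ↔ ∃ x ∈ T, sv A x = v) {X : Set (Euc N)} (hX : X ∈ flats A) :
    ∑ v ∈ V.filter (fun v => Fl A v ⊆ X), (-1 : ℤ) ^ sdim (Fl A v) = (-1 : ℤ) ^ sdim X := by
  let S : Set (Dehyperplane N n T) := {P | P ∈ A ∧ X ⊆ P.P}
  have hXF : Fl S (fun _ => 0) = X := by
    apply Subset.antisymm
    · intro x hx
      obtain ⟨-, B, hB, rfl⟩ := hX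
      refine ⟨hx.1, mem_iInter₂.2 fun P hP => hx.2 P ⟨hB hP, fun y hy => ?_⟩ rfl⟩
      exact mem_iInter₂.1 hy.2 P hP
    · exact fun x hx => ⟨flat_sub hX hx, fun P hP _ => hP.2 hx⟩
  have hne : (Ce S (fun _ => 0)).Nonempty := by
    obtain ⟨x, hx⟩ := hX.1
    exact ⟨x, flat_sub hX hx, fun P hP => (sg_zero P (flat_sub hX hx)).2 (hP.2 hx)⟩
  have := euler hT hA hV hA.1 S (fun P hP => hP.1) subset_union_right _ hne
  rw [hXF] at this
  rw [← this]
  unfold Eu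
  refine Finset.sum_congr (Finset.filter_congr fun v hv => ?_) fun _ _ => rfl
  obtain ⟨x, hx, rfl⟩ := (hV v).1 hv
  constructor
  · intro h P hP
    rw [sv_mem hP.1, sg_zero P hx]
    exact hP.2 (h (mem_Fl_sv hx))
  · intro h
    rw [← hXF]
    exact fun y hy => ⟨hy.1, fun P hP _ => hy.2 P hP.1 (h P hP)⟩

theorem moebius (hT : IsSimanifold n T) (hA : IsDA n T A)
    {V : Finset (Dehyperplane N n T → SignType)}
    (hV : ∀ v, v ∈ V ↔ ∃ x ∈ T, sv A x = v)
    (mu : Set (Euc N) → Set (Euc N) → ℤ)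
    (hmu1 : ∀ X ∈ flats A, mu X X = 1)
    (hmu2 : ∀ X ∈ flats A, ∀ Y ∈ flats A, Y ⊆ X → Y ≠ X →
      ∑ᶠ Z ∈ {Z ∈ flats A | Z ⊆ X ∧ Y ⊆ Z}, mu X Z = 0)
    (X : Set (Euc N)) (hX : X ∈ flats A) :
    ((V.filter (fun v => Fl A v = X)).card : ℤ) =
      ∑ᶠ Y ∈ {Y ∈ flats A | Y ⊆ X}, (-1 : ℤ) ^ (sdim X + sdim Y) * mu X Y := by
  obtain ⟨L, hL⟩ : ∃ L : Finset (Set (Euc N)), ∀ Y, Y ∈ L ↔ Y ∈ flats A :=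
    ⟨(flats_finite hA.1).toFinset, fun Y => by simp⟩
  have h1 : {Y ∈ flats A | Y ⊆ X} = ((L.filter (fun Y => Y ⊆ X) : Finset _) : Set _) := by
    ext Y; simp [hL]
  rw [h1, finsum_mem_coe_finset]
  have h2 : ∀ Y ∈ L.filter (fun Y => Y ⊆ X), (-1 : ℤ) ^ (sdim X + sdim Y) * mu X Y =
      ∑ v ∈ V, if Fl A v ⊆ Y then (-1 : ℤ) ^ sdim X * (-1 : ℤ) ^ sdim (Fl A v) * mu X Y
        else 0 := by
    intro Y hY
    rw [Finset.mem_filter, hL] at hY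
    rw [← Finset.sum_filter, ← Finset.sum_mul, ← Finset.mul_sum, flat_sum hT hA hV hY.1, pow_add]
  rw [Finset.sum_congr rfl h2, Finset.sum_comm, Finset.card_filter]
  push_cast
  refine Finset.sum_congr rfl fun v hv => ?_
  obtain ⟨x, hx, rfl⟩ := (hV v).1 hv
  have hF : Fl A (sv A x) ∈ flats A := Fl_sv_flat hx
  rw [← Finset.sum_filter, ← Finset.mul_sum, Finset.filter_filter]
  generalize Fl A (sv A x) = F at *
  split_ifs with h
  · subst h
    have : L.filter (fun Y => Y ⊆ F ∧ F ⊆ Y) = {F} := by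
      ext Y
      rw [Finset.mem_filter, Finset.mem_singleton, hL]
      constructor
      · exact fun h => Subset.antisymm h.2.1 h.2.2
      · rintro rfl; exact ⟨hF, Subset.rfl, Subset.rfl⟩
    rw [this, Finset.sum_singleton, hmu1 F hX, mul_one, ← mul_pow]
    simp
  · by_cases hFX : F ⊆ X
    · have h3 := hmu2 X hX F hF hFX h
      have h4 : {Z ∈ flats A | Z ⊆ X ∧ F ⊆ Z} =
          ((L.filter (fun Y => Y ⊆ X ∧ F ⊆ Y) : Finset _) : Set _) := by
        ext Y; simp [hL]
      rw [h4, finsum_mem_coe_finset] at h3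
      rw [h3, mul_zero]
    · rw [Finset.filter_eq_empty_iff.2, Finset.sum_empty, mul_zero]
      exact fun Y _ h => hFX (h.2.trans h.1)

/-- crossing hyperplanes yield members of the restriction -/
theorem exists_restrict (hT : IsSimanifold n T) (hA : IsDA n T A) {X : Set (Euc N)}
    (hX : X ∈ flats A) {P : Dehyperplane N n T} (hP : P ∈ A) (hne : (P.P ∩ X).Nonempty)
    (hns : ¬ X ⊆ P.P) : ∃ Q ∈ restrict A (sdim X) X,
      Q.P = P.P ∩ X ∧ Q.plus = P.plus ∩ X ∧ Q.minus = P.minus ∩ X := by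
  obtain ⟨k, hc, hp, hm⟩ := crossing hT hA hX hP hne hns
  rw [sdim_eq hc.simX]
  have hXT := flat_sub hX
  refine ⟨⟨P.P ∩ X, P.plus ∩ X, P.minus ∩ X, hc.sim0, hp, hm, ?_, ?_, ?_, ?_, ?_⟩,
    ⟨P, hP, hns, hne, rfl, rfl, rfl⟩, rfl, rfl, rfl⟩
  · ext x
    have := hc.un x
    simp only [mem_union, mem_inter_iff] at this ⊢
    tauto
  · exact disjoint_left.2 hc.dp
  · exact disjoint_left.2 hc.dpm
  · exact disjoint_left.2 fun x h h' => hc.dm x h' h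
  · apply Subset.antisymm
    · rintro x ⟨h1, h2⟩
      have hxP : x ∈ P.P := by
        rw [← P.closure_eq]
        exact ⟨closure_mono inter_subset_left h1, closure_mono inter_subset_left h2⟩
      exact ⟨hxP, flat_rel hX (P_sub P hxP) (closure_mono inter_subset_right h1)⟩
    · exact fun x hx => ⟨hc.cl hx, hc.symm.cl hx⟩

theorem sg_restrict {X : Set (Euc N)} {m : ℕ} {P : Dehyperplane N n T} {Q : Dehyperplane N m X}
    (h1 : Q.plus = P.plus ∩ X) (h2 : Q.minus = P.minus ∩ X) {x : Euc N} (hx : x ∈ X) :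
    sg Q x = sg P x := by
  unfold sg; simp [h1, h2, hx]

/-- the chamber of the restriction containing a generic point -/
theorem cell_eq (hT : IsSimanifold n T) (hA : IsDA n T A) {X : Set (Euc N)}
    (hX : X ∈ flats A) {x : Euc N} (hx : x ∈ T) (hFl : Fl A (sv A x) = X) :
    {y | y ∈ T ∧ sv A y = sv A x} =
      {y | y ∈ X ∧ ∀ Q ∈ restrict A (sdim X) X, sg Q y = sg Q x} := by
  have hxX : x ∈ X := hFl ▸ mem_Fl_sv hx
  have hXT := flat_sub hX
  ext y
  constructor
  · rintro ⟨hy, he⟩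
    have hyX : y ∈ X := by rw [← hFl, ← he]; exact mem_Fl_sv hy
    refine ⟨hyX, ?_⟩
    rintro Q ⟨P, hP, -, -, -, h1, h2⟩
    rw [sg_restrict h1 h2 hyX, sg_restrict h1 h2 hxX, ← sv_mem hP, ← sv_mem hP, he]
  · rintro ⟨hy, h⟩
    refine ⟨hXT hy, ?_⟩
    funext P
    by_cases hP : P ∈ A
    · rw [sv_mem hP, sv_mem hP]
      by_cases hne : (P.P ∩ X).Nonempty
      · by_cases hs : X ⊆ P.P
        · rw [(sg_zero P (hXT hy)).2 (hs hy), (sg_zero P hx).2 (hs hxX)]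
        · obtain ⟨Q, hQ, -, h1, h2⟩ := exists_restrict hT hA hX hP hne hs
          rw [← sg_restrict h1 h2 hy, ← sg_restrict h1 h2 hxX, h Q hQ]
      · exact one_side (flat_conn hT hA hX) hXT P (fun z hz hzP => hne ⟨z, hzP, hz⟩) hy hxX
    · simp [sv, hP]

theorem chambers_eq (hT : IsSimanifold n T) (hA : IsDA n T A)
    {V : Finset (Dehyperplane N n T → SignType)}
    (hV : ∀ v, v ∈ V ↔ ∃ x ∈ T, sv A x = v) {X : Set (Euc N)} (hX : X ∈ flats A) :
    {F | IsChamber (restrict A (sdim X) X) F} =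
      (fun v => {y | y ∈ T ∧ sv A y = v}) '' (V.filter (fun v => Fl A v = X) : Finset _) := by
  have hXT := flat_sub hX
  ext F
  constructor
  · rintro ⟨⟨x, hxF⟩, ε, hε, rfl⟩
    have hxX : x ∈ X := hxF.1
    have hx := hXT hxX
    have hsx : ∀ Q ∈ restrict A (sdim X) X, sg Q x = ε Q := fun Q hQ =>
      (mem_part Q hxX _).1 (mem_iInter₂.1 hxF.2 Q hQ)
    have hFl : Fl A (sv A x) = X := by
      apply Subset.antisymm
      · intro y hy
        obtain ⟨-, B, hB, rfl⟩ := hX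
        refine ⟨hy.1, mem_iInter₂.2 fun P hP => hy.2 P (hB hP) ?_⟩
        rw [sv_mem (hB hP), sg_zero P hx]
        exact mem_iInter₂.1 hxX.2 P hP
      · intro y hy
        refine ⟨hXT hy, fun P hP h0 => ?_⟩
        rw [sv_mem hP, sg_zero P hx] at h0
        by_contra hyP
        obtain ⟨Q, hQ, hQP, -, -⟩ := exists_restrict hT hA hX hP ⟨x, h0, hxX⟩
          (fun h => hyP (h hy))
        refine hε Q hQ ?_
        rw [← hsx Q hQ, sg_zero Q hxX, hQP]
        exact ⟨h0, hxX⟩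
    refine ⟨sv A x, ?_, ?_⟩
    · rw [Finset.mem_coe, Finset.mem_filter]
      exact ⟨(hV _).2 ⟨x, hx, rfl⟩, hFl⟩
    · change {y | y ∈ T ∧ sv A y = sv A x} = _
      rw [cell_eq hT hA hX hx hFl]
      ext y
      rw [mem_inter_iff, mem_iInter₂]
      refine and_congr_right fun hy => forall₂_congr fun Q hQ => ?_
      rw [mem_part Q hy, hsx Q hQ]
  · rintro ⟨v, hv, rfl⟩
    rw [Finset.mem_coe, Finset.mem_filter] at hv
    obtain ⟨hv, hFl⟩ := hv
    obtain ⟨x, hx, rfl⟩ := (hV v).1 hv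
    have hxX : x ∈ X := hFl ▸ mem_Fl_sv hx
    refine ⟨⟨x, hx, rfl⟩, fun Q => sg Q x, ?_, ?_⟩
    · rintro Q ⟨P, hP, hns, -, hQP, -, -⟩ h0
      have h0 : sg Q x = 0 := h0
      rw [sg_zero Q hxX, hQP] at h0
      refine hns ?_
      rw [← hFl]
      exact fun y hy => hy.2 P hP (by rw [sv_mem hP, sg_zero P hx]; exact h0.1)
    · change {y | y ∈ T ∧ sv A y = sv A x} = _
      rw [cell_eq hT hA hX hx hFl]
      ext y
      rw [mem_inter_iff, mem_iInter₂]
      refine and_congr_right fun hy => forall₂_congr fun Q hQ => ?_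
      rw [mem_part Q hy]

theorem main (hT : IsSimanifold n T) (hA : IsDA n T A)
    (mu : Set (Euc N) → Set (Euc N) → ℤ)
    (hmu1 : ∀ X ∈ flats A, mu X X = 1)
    (hmu2 : ∀ X ∈ flats A, ∀ Y ∈ flats A, Y ⊆ X → Y ≠ X →
      ∑ᶠ Z ∈ {Z ∈ flats A | Z ⊆ X ∧ Y ⊆ Z}, mu X Z = 0)
    (X : Set (Euc N)) (hX : X ∈ flats A) :
    (Set.ncard {F | IsChamber (restrict A (sdim X) X) F} : ℤ) =
      ∑ᶠ Y ∈ {Y ∈ flats A | Y ⊆ X}, (-1 : ℤ) ^ (sdim X + sdim Y) * mu X Y := by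
  obtain ⟨V, hV⟩ : ∃ V : Finset (Dehyperplane N n T → SignType),
      ∀ v, v ∈ V ↔ ∃ x ∈ T, sv A x = v :=
    ⟨(sv_finite hA.1 T).toFinset, fun v => by simp⟩
  rw [← moebius hT hA hV mu hmu1 hmu2 X hX, chambers_eq hT hA hV hX, ncard_image_of_injOn,
    ncard_coe_finset]
  intro v hv w hw h
  rw [Finset.mem_coe, Finset.mem_filter] at hv
  obtain ⟨x, hx, rfl⟩ := (hV v).1 hv.1
  have : x ∈ {y | y ∈ T ∧ sv A y = w} := by
    have h' : {y | y ∈ T ∧ sv A y = sv A x} = {y | y ∈ T ∧ sv A y = w} := h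
    rw [← h']; exact ⟨hx, rfl⟩
  exact this.2

end count

end AS

end Part12

/-- for every flat `X` of a DA `A`,
`#C_{A^X} = Σ_{Y ≥ X} (−1)^{dim Y − dim X} μ(X,Y)`, where `μ` is the Möbius function of
`L_A` (characterized by `μ(X,X) = 1`, `Σ_{X ≤ Z ≤ Y} μ(X,Z) = 0` for `X < Y`, and
`μ(X,Y) = 0` if `X ≰ Y`).  Here `Y ≥ X ↔ Y ⊆ X`, and the sign `(−1)^{dim Y − dim X}` is
written in the equivalent parity form `(−1)^{dim X + dim Y}`. -/
theorem card_chambers_restriction_eq_moebius_sum {N n : ℕ} (hn : 1 ≤ n) {T : Set (Euc N)}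
    (hT : IsSimanifold n T) (A : Set (Dehyperplane N n T)) (hA : IsDA n T A)
    (mu : Set (Euc N) → Set (Euc N) → ℤ)
    (hmu0 : ∀ X ∈ flats A, ∀ Y ∈ flats A, ¬ Y ⊆ X → mu X Y = 0)
    (hmu1 : ∀ X ∈ flats A, mu X X = 1)
    (hmu2 : ∀ X ∈ flats A, ∀ Y ∈ flats A, Y ⊆ X → Y ≠ X →
      ∑ᶠ Z ∈ {Z ∈ flats A | Z ⊆ X ∧ Y ⊆ Z}, mu X Z = 0)
    (X : Set (Euc N)) (hX : X ∈ flats A) :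
    (Set.ncard {F | IsChamber (restrict A (sdim X) X) F} : ℤ) =
      ∑ᶠ Y ∈ {Y ∈ flats A | Y ⊆ X}, (-1 : ℤ) ^ (sdim X + sdim Y) * mu X Y := by
  exact AS.main hT hA mu hmu1 hmu2 X hX
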